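/- arXiv:2411.03158 — 4 statements merged into one kernel-verified Lean document; each statement's English description precedes it below -/
import Mathlib

section
/- Assume the form ⟨−,−⟩ is symmetric (and nondegenerate). Let H ⊆ V be a subspace with dim H = k and dim(H ∩ H^⊥) = k − r, and assume max{0, 2k − n} < r. Then the stabilizer S = {g ∈ End(V) : g is an isometry of V, det g = 1, and g(H) = H} has exactly two connected components as a subspace of End(V). -/
/-!
Let `R = H ∩ H^⊥`. An isometry stabilizing `H` acts on the nondegenerate spaces `H / R` and
`H^⊥ / R`, and the component group of the stabilizer of `H` in the full orthogonal group is
detected by the two characters `det g` and `d g`, the latter being the determinant of `g` on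
`H / R`. Both are continuous with values `±1` (`exists_quotient_det`, `det_sq_isoStab`), so the
theorem reduces to two facts about the stabilizer in `SO(V)`.

*Both values of `d` occur.* The numerical hypotheses say that `H` and `H^⊥` are not totally
isotropic, so they contain unit vectors `a` and `c`. The product `ρ` of the two reflections has
determinant `1` and acts on `H` as the reflection in `a`, whence `d ρ = -1`.

*The fibres of `d` are path connected.* By translation with `ρ` it suffices to join `g` to `1`
when `det g = d g = 1`. If `-1` is not an eigenvalue of `g`, the Cayley family does this, its
parameter running over the complex line minus finitely many points (`joinedIn_of_cayley`). In
general, let `σ` be the involution that is `-1` on the generalized eigenspace of `g` for `-1` and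
`1` on the other ones; by uniqueness of the Fitting decomposition it stabilizes `H`, and `σ g` is
covered by the previous case (`exists_involution`). This leaves involutions. A nontrivial
involution with trivial characters has in its `-1`-eigenspace a hyperbolic pair `u, v` with
`u ∈ R`, or with `u, v ∈ H`, or with `u, v ∈ H^⊥` (`exists_hyperbolic`). In each case the torus
scaling `u` by `t` and `v` by `t⁻¹` stabilizes `H` and joins `1` to the isometry that is `-1` on
the plane of `u` and `v`; multiplying by the latter shrinks the `-1`-eigenspace, and induction
on its dimension concludes (`joinedIn_involution`).
-/

open Module

/-- Left orthogonal complement `H^⊥ = {v | ⟨v,w⟩ = 0 for all w ∈ H}` of a subspace with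
respect to a bilinear form. -/
def bperp {V : Type*} [AddCommGroup V] [Module ℂ V]
    (B : V →ₗ[ℂ] V →ₗ[ℂ] ℂ) (H : Submodule ℂ V) : Submodule ℂ V where
  carrier := {v | ∀ w ∈ H, B v w = 0}
  add_mem' := by
    intro a b ha hb w hw
    rw [map_add, LinearMap.add_apply, ha w hw, hb w hw, add_zero]
  zero_mem' := by
    intro w hw
    simp
  smul_mem' := by
    intro c a ha w hw
    rw [map_smul, LinearMap.smul_apply, ha w hw, smul_zero]

/-! ### Isometries stabilizing a subspace -/

section Stabilizer

variable {V : Type*} [NormedAddCommGroup V] [NormedSpace ℂ V]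
  {B : V →ₗ[ℂ] V →ₗ[ℂ] ℂ} {H : Submodule ℂ V}

/-- The endomorphisms preserving the form and mapping `H` into itself. In finite dimension and
for a nondegenerate form this is the stabilizer of `H` in the full orthogonal group. -/
def isoStab (B : V →ₗ[ℂ] V →ₗ[ℂ] ℂ) (H : Submodule ℂ V) : Set (V →L[ℂ] V) :=
  {g | (∀ v w, B (g v) (g w) = B v w) ∧ ∀ x ∈ H, g x ∈ H}

lemma isoStab_one : (1 : V →L[ℂ] V) ∈ isoStab B H :=
  ⟨fun _ _ => rfl, fun _ hx => hx⟩

lemma isoStab_mul {g h : V →L[ℂ] V} (hg : g ∈ isoStab B H) (hh : h ∈ isoStab B H) :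
    g * h ∈ isoStab B H :=
  ⟨fun v w => (hg.1 _ _).trans (hh.1 v w), fun x hx => hg.2 _ (hh.2 x hx)⟩

lemma isoStab_injective (hB : ∀ v, (∀ w, B v w = 0) → v = 0) {g : V →L[ℂ] V}
    (hg : g ∈ isoStab B H) : Function.Injective g := by
  refine (injective_iff_map_eq_zero g).2 fun x hx => hB x fun w => ?_
  rw [← hg.1, hx]; simp

lemma isoStab_map_eq [FiniteDimensional ℂ V] (hB : ∀ v, (∀ w, B v w = 0) → v = 0)
    {g : V →L[ℂ] V} (hg : g ∈ isoStab B H) : Submodule.map (g : V →ₗ[ℂ] V) H = H := by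
  refine Submodule.eq_of_le_of_finrank_eq ?_ ?_
  · rintro _ ⟨x, hx, rfl⟩
    exact hg.2 x hx
  · exact (Submodule.equivMapOfInjective _ (isoStab_injective hB hg) H).finrank_eq.symm

lemma isoStab_rad [FiniteDimensional ℂ V] (hB : ∀ v, (∀ w, B v w = 0) → v = 0)
    {g : V →L[ℂ] V} (hg : g ∈ isoStab B H) {x : V} (hx : x ∈ H ⊓ bperp B H) :
    g x ∈ H ⊓ bperp B H := by
  refine ⟨hg.2 x hx.1, fun w hw => ?_⟩
  rw [← isoStab_map_eq hB hg] at hw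
  obtain ⟨y, hy, rfl⟩ := hw
  exact (hg.1 x y).trans (hx.2 y hy)

lemma joinedIn_mul {g h : V →L[ℂ] V} (hg : JoinedIn (isoStab B H) 1 g)
    (hh : JoinedIn (isoStab B H) 1 h) : JoinedIn (isoStab B H) 1 (g * h) := by
  have := hg.mul hh
  rw [one_mul] at this
  refine this.mono ?_
  rintro _ ⟨a, ha, b, hb, rfl⟩
  exact isoStab_mul ha hb

/-- A family of stabilizing isometries over a cofinite part of the complex line joins any two
of its members, because the complement of a finite set in `ℂ` is path connected. -/
lemma joinedIn_family {F : Set ℂ} (hF : F.Finite) {f : ℂ → (V →L[ℂ] V)}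
    (hf : ContinuousOn f Fᶜ) (hm : ∀ t ∈ Fᶜ, f t ∈ isoStab B H) {a b : ℂ} (ha : a ∉ F)
    (hb : b ∉ F) : JoinedIn (isoStab B H) (f a) (f b) := by
  have h1 : IsPathConnected (Fᶜ : Set ℂ) :=
    hF.countable.isPathConnected_compl_of_one_lt_rank (by simp [Complex.rank_real_complex])
  refine ((h1.joinedIn a ha b hb).map_continuousOn hf).mono ?_
  rintro _ ⟨t, ht, rfl⟩
  exact hm t ht

/-- A continuous function with values `±1` on the stabilizer is constant along paths. -/
lemma joinedIn_somePath_const {g h : V →L[ℂ] V} (hj : JoinedIn (isoStab B H) g h)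
    {d : (V →L[ℂ] V) → ℂ} (hd : Continuous d) (hd2 : ∀ x ∈ isoStab B H, d x ^ 2 = 1)
    (t : unitInterval) : d g = d (hj.somePath t) := by
  have hT : IsDiscrete ({1, -1} : Set ℂ) := (Set.toFinite _).isDiscrete
  have := (isPreconnected_univ (α := unitInterval)).constant_of_mapsTo hT
    (f := fun t => d (hj.somePath t)) (by fun_prop)
    (fun t _ => by
      simpa [sq, mul_self_eq_one_iff] using hd2 _ (hj.somePath_mem t))
    (Set.mem_univ 0) (Set.mem_univ t)
  simpa using this

lemma joinedIn_const {g h : V →L[ℂ] V} (hj : JoinedIn (isoStab B H) g h)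
    {d : (V →L[ℂ] V) → ℂ} (hd : Continuous d) (hd2 : ∀ x ∈ isoStab B H, d x ^ 2 = 1) :
    d g = d h := by
  simpa using joinedIn_somePath_const hj hd hd2 1

end Stabilizer

/-! ### Determinants of isometries -/

lemma det_sq_of_isometry {W : Type*} [AddCommGroup W] [Module ℂ W] [FiniteDimensional ℂ W]
    (b : W →ₗ[ℂ] W →ₗ[ℂ] ℂ) (hb : LinearMap.BilinForm.Nondegenerate b)
    (f : W →ₗ[ℂ] W) (hf : ∀ v w, b (f v) (f w) = b v w) : LinearMap.det f ^ 2 = 1 := by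
  classical
  let e := Module.finBasis ℂ W
  have h1 : LinearMap.BilinForm.comp b f f = b := by
    ext v w; exact hf v w
  have h2 := LinearMap.BilinForm.toMatrix_comp e e b f f
  rw [h1] at h2
  have h3 := congrArg Matrix.det h2
  have h4 := (LinearMap.BilinForm.nondegenerate_iff_det_ne_zero e).1 hb
  rw [Matrix.det_mul, Matrix.det_mul, Matrix.det_transpose, LinearMap.det_toMatrix] at h3
  have h5 : (LinearMap.det f ^ 2 - 1) * (LinearMap.BilinForm.toMatrix e b).det = 0 := by
    linear_combination -h3
  have := (mul_eq_zero.1 h5).resolve_right h4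
  linear_combination this

lemma nondegenerate_of_symm {W : Type*} [AddCommGroup W] [Module ℂ W]
    (b : W →ₗ[ℂ] W →ₗ[ℂ] ℂ) (hb : ∀ v, (∀ w, b v w = 0) → v = 0)
    (hs : ∀ v w, b v w = b w v) : LinearMap.BilinForm.Nondegenerate b :=
  ⟨hb, fun v h => hb v fun w => (hs v w).trans (h w)⟩

section Discriminant

variable {V : Type*} [NormedAddCommGroup V] [NormedSpace ℂ V] [FiniteDimensional ℂ V]
  {B : V →ₗ[ℂ] V →ₗ[ℂ] ℂ} {H : Submodule ℂ V}

/-- The determinant of the action on `H / (H ∩ H^⊥)`, as a continuous function on all of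
`End V`: it is a `±1`-valued character of the stabilizer of `H`, and takes the value `-1` on
every map acting on `H` as a reflection. It is realized as the determinant of the compression
to a complement `A` of the radical in `H`. -/
lemma exists_quotient_det (hB : ∀ v, (∀ w, B v w = 0) → v = 0)
    (hsymm : ∀ v w, B v w = B w v) :
    ∃ d : (V →L[ℂ] V) → ℂ, Continuous d ∧ d 1 = 1 ∧
      (∀ g ∈ isoStab B H, ∀ h ∈ isoStab B H, d (g * h) = d g * d h) ∧
      (∀ g ∈ isoStab B H, d g ^ 2 = 1) ∧
      (∀ (g : V →L[ℂ] V) (a : V), a ∈ H → B a a = 1 →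
        (∀ x ∈ H, g x = x - (2 * B x a) • a) → d g = -1) := by
  obtain ⟨A, hA1, hA2⟩ : ∃ A : Submodule ℂ V,
      A ⊓ (H ⊓ bperp B H) = ⊥ ∧ A ⊔ (H ⊓ bperp B H) = H := by
    obtain ⟨A', hA'⟩ := Submodule.exists_isCompl (H ⊓ bperp B H)
    refine ⟨A' ⊓ H, ?_, ?_⟩
    · rw [eq_bot_iff]
      rintro x ⟨⟨h1, -⟩, h2⟩
      exact hA'.disjoint.le_bot ⟨h2, h1⟩
    · refine le_antisymm (sup_le inf_le_right inf_le_left) fun x hx => ?_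
      obtain ⟨y, hy, z, hz, rfl⟩ := Submodule.mem_sup.1
        (hA'.sup_eq_top ▸ Submodule.mem_top : x ∈ (H ⊓ bperp B H) ⊔ A')
      refine Submodule.mem_sup.2 ⟨z, ⟨hz, ?_⟩, y, hy, add_comm _ _⟩
      have := H.sub_mem hx hy.1
      rwa [add_sub_cancel_left] at this
  have hAH : A ≤ H := hA2 ▸ le_sup_left
  have hdec : ∀ x ∈ H, ∃ y ∈ A, ∃ z ∈ H ⊓ bperp B H, y + z = x := fun x hx =>
    Submodule.mem_sup.1 (hA2.symm ▸ hx)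
  have hradl : ∀ z ∈ H ⊓ bperp B H, ∀ x ∈ H, B z x = 0 := fun z hz x hx => hz.2 x hx
  have hradr : ∀ z ∈ H ⊓ bperp B H, ∀ x ∈ H, B x z = 0 := fun z hz x hx =>
    (hsymm _ _).trans (hz.2 x hx)
  let b : A →ₗ[ℂ] A →ₗ[ℂ] ℂ := B.compl₁₂ A.subtype A.subtype
  have hb0 : ∀ v : A, (∀ w : A, b v w = 0) → v = 0 := by
    intro v hv
    have : (v : V) ∈ A ⊓ (H ⊓ bperp B H) := by
      refine ⟨v.2, hAH v.2, fun w hw => ?_⟩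
      obtain ⟨y, hy, z, hz, rfl⟩ := hdec w hw
      rw [map_add, hradr z hz _ (hAH v.2), add_zero]
      exact hv ⟨y, hy⟩
    rw [hA1] at this
    exact Subtype.ext this
  have hb : LinearMap.BilinForm.Nondegenerate b :=
    nondegenerate_of_symm b hb0 fun v w => hsymm _ _
  -- `P` is the orthogonal projection onto `A`.
  let P : V →ₗ[ℂ] A := (LinearMap.BilinForm.toDual b hb).symm.toLinearMap ∘ₗ
    (LinearMap.lcomp ℂ ℂ A.subtype) ∘ₗ B
  have hP : ∀ v (a : A), B (P v) a = B v a := fun v a =>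
    LinearMap.BilinForm.apply_toDual_symm_apply (B := b) (hB := hb)
      ((LinearMap.lcomp ℂ ℂ A.subtype) (B v)) a
  have hPA : ∀ a : A, P a = a := by
    intro a
    rw [← sub_eq_zero]
    refine hb0 _ fun w => ?_
    have := hP a w
    change B ((P a - a : A) : V) w = 0
    rw [Submodule.coe_sub, map_sub, LinearMap.sub_apply, this, sub_self]
  have hPR : ∀ z ∈ H ⊓ bperp B H, P z = 0 := fun z hz =>
    hb0 _ fun w => (hP z w).trans (hradl z hz _ (hAH w.2))
  have hPH : ∀ x ∈ H, x - P x ∈ H ⊓ bperp B H := by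
    intro x hx
    obtain ⟨y, hy, z, hz, rfl⟩ := hdec x hx
    rw [map_add, hPR z hz, add_zero, hPA ⟨y, hy⟩, add_sub_cancel_left]
    exact hz
  have hPB : ∀ x ∈ H, ∀ y ∈ H, B (P x) (P y) = B x y := by
    intro x hx y hy
    have h1 := hradl _ (hPH x hx) y hy
    have h2 := hradr _ (hPH y hy) (P x) (hAH (P x).2)
    rw [map_sub, LinearMap.sub_apply] at h1
    rw [map_sub] at h2
    linear_combination -h1 - h2
  let c : (V →L[ℂ] V) → (A →L[ℂ] A) := fun g =>
    (LinearMap.toContinuousLinearMap P) ∘L g ∘L A.subtypeL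
  have hc : ∀ g (x : A), c g x = P (g x) := fun g x => rfl
  refine ⟨fun g => (c g).det, ?_, ?_, ?_, ?_, ?_⟩
  · exact ContinuousLinearMap.continuous_det.comp
      (continuous_const.clm_comp (continuous_id.clm_comp continuous_const))
  · have : c 1 = 1 := by
      ext x; rw [hc]; exact congrArg Subtype.val (hPA x)
    simp only [this]
    exact LinearMap.det_id
  · intro g hg h hh
    have : c (g * h) = c g * c h := by
      ext x
      rw [mul_apply_eq_comp, hc, hc, hc]
      have h1 := hPR _ (isoStab_rad hB hg (hPH _ (hh.2 x (hAH x.2))))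
      rw [map_sub, map_sub, sub_eq_zero] at h1
      exact congrArg Subtype.val h1
    simp only [this]
    exact LinearMap.det_comp _ _
  · intro g hg
    refine det_sq_of_isometry b hb _ fun v w => ?_
    exact (hPB _ (hg.2 _ (hAH v.2)) _ (hg.2 _ (hAH w.2))).trans (hg.1 _ _)
  · intro g a ha haa hg
    have : ((c g : A →L[ℂ] A) : A →ₗ[ℂ] A) =
        LinearMap.transvection ((-2 : ℂ) • b.flip (P a)) (P a) := by
      ext x
      have h1 : b x (P a) = B x a := by
        have := hPB x (hAH x.2) a ha
        rw [hPA] at this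
        exact this
      have h2 : c g x = x - (2 * B x a) • P a := by
        rw [hc, hg _ (hAH x.2), map_sub, map_smul, hPA]
      rw [LinearMap.transvection.apply, ContinuousLinearMap.coe_coe, h2, LinearMap.smul_apply,
        LinearMap.flip_apply, h1]
      simp [sub_eq_add_neg]
    change LinearMap.det ((c g : A →L[ℂ] A) : A →ₗ[ℂ] A) = -1
    rw [this, LinearMap.transvection.det, LinearMap.smul_apply, LinearMap.flip_apply]
    have : b (P a) (P a) = 1 := (hPB a ha a ha).trans haa
    rw [this]; norm_num

lemma det_sq_isoStab (hB : ∀ v, (∀ w, B v w = 0) → v = 0) (hsymm : ∀ v w, B v w = B w v) :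
    ∀ g ∈ isoStab B H, LinearMap.det (g : V →ₗ[ℂ] V) ^ 2 = 1 := fun _ hg =>
  det_sq_of_isometry B (nondegenerate_of_symm B hB hsymm) _ hg.1

end Discriminant

/-! ### The Cayley family -/

section Cayley

variable {V : Type*} [NormedAddCommGroup V] [NormedSpace ℂ V] [FiniteDimensional ℂ V]
  {B : V →ₗ[ℂ] V →ₗ[ℂ] ℂ} {H : Submodule ℂ V}

lemma isUnit_of_injective {f : V →L[ℂ] V} (hf : Function.Injective f) : IsUnit f := by
  have hs : Function.Surjective f :=
    LinearMap.surjective_of_injective (f := (f : V →ₗ[ℂ] V)) hf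
  let e := (LinearEquiv.ofBijective (f : V →ₗ[ℂ] V) ⟨hf, hs⟩).toContinuousLinearEquiv
  refine ⟨ContinuousLinearEquiv.toUnit e, ?_⟩
  ext x
  rfl

/-- A stabilizing isometry without the eigenvalue `-1` is joined to the identity by the Cayley
family `((1 + g) - t (1 - g)) ((1 + g) + t (1 - g))⁻¹`, which is `1` at `t = 0` and `g` at
`t = 1`. -/
lemma joinedIn_of_cayley {g : V →L[ℂ] V} (hg : g ∈ isoStab B H)
    (h1 : ∀ x, g x = -x → x = 0) : JoinedIn (isoStab B H) 1 g := by
  have : CompleteSpace V := FiniteDimensional.complete ℂ V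
  let D : ℂ → (V →L[ℂ] V) := fun t => (1 + g) + t • (1 - g)
  let N : ℂ → (V →L[ℂ] V) := fun t => (1 + g) - t • (1 - g)
  have hDx : ∀ t x, D t x = (x + g x) + t • (x - g x) := fun t x => rfl
  have hNx : ∀ t x, N t x = (x + g x) - t • (x - g x) := fun t x => rfl
  let F : Set ℂ := {t | ¬ IsUnit (D t)}
  -- `D t x = 0` says that `x` is an eigenvector of `g` with eigenvalue `(t + 1) / (t - 1)`.
  have hF : F.Finite := by
    have hfin : {μ : ℂ | Module.End.HasEigenvalue (g : V →ₗ[ℂ] V) μ}.Finite :=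
      Module.End.finite_hasEigenvalue _
    refine Set.Finite.subset (hfin.image fun μ => (μ + 1) / (μ - 1)) ?_
    intro t ht
    have hni : ¬ Function.Injective (D t) := fun h => ht (isUnit_of_injective h)
    rw [injective_iff_map_eq_zero] at hni
    push Not at hni
    obtain ⟨x, hx, hx0⟩ := hni
    rw [hDx] at hx
    have ht1 : t - 1 ≠ 0 := by
      intro h
      have : t = 1 := by linear_combination h
      subst this
      refine hx0 ?_
      have h2 : (2 : ℂ) • x = 0 := by rw [← hx, two_smul, one_smul]; abel
      exact (smul_eq_zero.1 h2).resolve_left two_ne_zero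
    have hgx : g x = ((t + 1) / (t - 1)) • x := by
      have : (t - 1) • g x = (t + 1) • x := by
        rw [← sub_eq_zero, ← neg_eq_zero, ← hx]
        module
      rw [div_eq_inv_mul, mul_smul, ← this, smul_smul, inv_mul_cancel₀ ht1, one_smul]
    refine ⟨(t + 1) / (t - 1), ?_, ?_⟩
    · exact Module.End.hasEigenvalue_of_hasEigenvector (x := x)
        ⟨Module.End.mem_eigenspace_iff.2 hgx, hx0⟩
    · have h3 : (t + 1) / (t - 1) + 1 = 2 * t / (t - 1) := by field_simp; ring
      have h4 : (t + 1) / (t - 1) - 1 = 2 / (t - 1) := by field_simp; ring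
      change ((t + 1) / (t - 1) + 1) / ((t + 1) / (t - 1) - 1) = t
      rw [h3, h4]
      field_simp
  have hNH : ∀ t, ∀ x ∈ H, N t x ∈ H := fun t x hx =>
    H.sub_mem (H.add_mem hx (hg.2 x hx)) (H.smul_mem t (H.sub_mem hx (hg.2 x hx)))
  have hDH : ∀ t, ∀ x ∈ H, D t x ∈ H := fun t x hx =>
    H.add_mem (H.add_mem hx (hg.2 x hx)) (H.smul_mem t (H.sub_mem hx (hg.2 x hx)))
  have hND : ∀ t x y, B (N t x) (N t y) = B (D t x) (D t y) := by
    intro t x y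
    have := hg.1 x y
    rw [hNx, hNx, hDx, hDx]
    simp only [map_add, map_sub, map_smul, LinearMap.add_apply, LinearMap.sub_apply,
      LinearMap.smul_apply, smul_eq_mul]
    linear_combination 4 * t * this
  let f : ℂ → (V →L[ℂ] V) := fun t => N t * Ring.inverse (D t)
  have hf : ContinuousOn f Fᶜ := by
    intro t ht
    have ht' : IsUnit (D t) := not_not.1 ht
    have hD : Continuous D := by fun_prop
    have hN : Continuous N := by fun_prop
    have hi : ContinuousAt Ring.inverse (D t) := by
      have := NormedRing.inverse_continuousAt ht'.unit
      rwa [IsUnit.unit_spec] at this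
    exact (hN.continuousAt.mul
      (ContinuousAt.comp (f := D) (x := t) hi hD.continuousAt)).continuousWithinAt
  have hm : ∀ t ∈ Fᶜ, f t ∈ isoStab B H := by
    intro t ht
    have ht' : IsUnit (D t) := not_not.1 ht
    have hinv : ∀ x, D t (Ring.inverse (D t) x) = x := fun x => by
      have := Ring.mul_inverse_cancel _ ht'
      exact congrArg (fun q : V →L[ℂ] V => q x) this
    have hinv' : ∀ x, Ring.inverse (D t) (D t x) = x := fun x => by
      have := Ring.inverse_mul_cancel _ ht'
      exact congrArg (fun q : V →L[ℂ] V => q x) this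
    refine ⟨fun v w => ?_, fun x hx => hNH t _ ?_⟩
    · change B (N t (Ring.inverse (D t) v)) (N t (Ring.inverse (D t) w)) = _
      rw [hND, hinv, hinv]
    · have hmap : Submodule.map (D t : V →ₗ[ℂ] V) H = H := by
        refine Submodule.eq_of_le_of_finrank_eq ?_ ?_
        · rintro _ ⟨y, hy, rfl⟩
          exact hDH t y hy
        · exact (Submodule.equivMapOfInjective _
            (Function.LeftInverse.injective hinv') H).finrank_eq.symm
      rw [← hmap] at hx
      obtain ⟨y, hy, rfl⟩ := hx
      change Ring.inverse (D t) (D t y) ∈ H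
      rwa [hinv']
  have hD0 : IsUnit (D 0) := by
    refine isUnit_of_injective ((injective_iff_map_eq_zero _).2 fun x hx => h1 x ?_)
    rw [hDx, zero_smul, add_zero] at hx
    exact (neg_eq_of_add_eq_zero_right hx).symm
  have hD1 : IsUnit (D 1) := by
    refine isUnit_of_injective ((injective_iff_map_eq_zero _).2 fun x hx => ?_)
    have h2 : (2 : ℂ) • x = 0 := by rw [← hx, hDx, two_smul, one_smul]; abel
    exact (smul_eq_zero.1 h2).resolve_left two_ne_zero
  have hj := joinedIn_family hF hf hm (a := 0) (b := 1) (not_not.2 hD0) (not_not.2 hD1)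
  have e0 : f 0 = 1 := by
    have : N 0 = D 0 := by simp [N, D]
    change N 0 * _ = 1
    rw [this, Ring.mul_inverse_cancel _ hD0]
  have e1 : f 1 = g := by
    have : N 1 = g * D 1 := by
      ext x
      rw [mul_apply_eq_comp, hNx, hDx]
      simp only [one_smul, map_add, map_sub]
      abel
    change N 1 * _ = g
    rw [this, mul_assoc, Ring.mul_inverse_cancel _ hD1, mul_one]
  rwa [e0, e1] at hj

end Cayley

/-! ### Reduction to involutions -/

section Fitting

variable {V : Type*} [NormedAddCommGroup V] [NormedSpace ℂ V] [FiniteDimensional ℂ V]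
  {B : V →ₗ[ℂ] V →ₗ[ℂ] ℂ} {H : Submodule ℂ V}

/-- The involution that is `-1` on the generalized eigenspace of `g` for `-1` and `1` on the
other generalized eigenspaces differs from `g` by a stabilizing isometry without the
eigenvalue `-1`. -/
lemma exists_involution (hB : ∀ v, (∀ w, B v w = 0) → v = 0)
    (hsymm : ∀ v w, B v w = B w v) {g : V →L[ℂ] V} (hg : g ∈ isoStab B H) :
    ∃ σ ∈ isoStab B H, σ * σ = 1 ∧ JoinedIn (isoStab B H) 1 (σ * g) := by
  let f : V →ₗ[ℂ] V := (g : V →ₗ[ℂ] V) + 1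
  have hfx : ∀ x, f x = g x + x := fun x => rfl
  have hfH : ∀ x ∈ H, f x ∈ H := fun x hx => H.add_mem (hg.2 x hx) hx
  obtain ⟨m, hm1, hm2, h0⟩ := ((LinearMap.eventually_isCompl_ker_pow_range_pow f).and
    ((LinearMap.eventually_isCompl_ker_pow_range_pow (f.restrict hfH)).and
      (Filter.eventually_ge_atTop 1))).exists
  have hgs : Function.Surjective g :=
    LinearMap.surjective_of_injective (f := (g : V →ₗ[ℂ] V)) (isoStab_injective hB hg)
  have hcomm : ∀ (j : ℕ) x, (f ^ j) (g x) = g ((f ^ j) x) := by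
    have : Commute f (g : V →ₗ[ℂ] V) :=
      (Commute.refl (g : V →ₗ[ℂ] V)).add_left (Commute.one_left _)
    intro j x
    exact congrArg (fun q : V →ₗ[ℂ] V => q x) (this.pow_left j).eq
  -- The adjoint of `f = 1 + g` is `1 + g⁻¹ = g⁻¹ f`.
  have horth : ∀ (j : ℕ) x y, (f ^ j) x = 0 → B x ((f ^ j) y) = 0 := by
    intro j
    induction j with
    | zero => intro x y hx; simp at hx; simp [hx]
    | succ j ih =>
      intro x y hx
      obtain ⟨z, rfl⟩ := hgs x
      have e : B (g z) ((f ^ (j + 1)) y) = B (f z) ((f ^ j) y) := by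
        rw [pow_succ', Module.End.mul_apply, hfx, hfx, map_add, hg.1, map_add,
          LinearMap.add_apply, add_comm]
      rw [e]
      refine ih _ _ ?_
      rw [← Module.End.mul_apply, ← pow_succ]
      rw [hcomm] at hx
      exact (isoStab_injective hB hg) (by rw [hx, map_zero])
  set K := LinearMap.ker (f ^ m) with hK
  set L := LinearMap.range (f ^ m) with hL
  have hKL : ∀ x ∈ K, ∀ y ∈ L, B x y = 0 := by
    rintro x hx _ ⟨y, rfl⟩
    exact horth m x y hx
  have hdec : ∀ x, ∃ y ∈ K, ∃ z ∈ L, y + z = x := fun x =>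
    Submodule.mem_sup.1 (hm1.sup_eq_top ▸ Submodule.mem_top)
  let p := K.projection L hm1
  let σ : V →L[ℂ] V := LinearMap.toContinuousLinearMap (LinearMap.id - (2 : ℂ) • p)
  have hσ : ∀ y ∈ K, ∀ z ∈ L, σ (y + z) = -y + z := by
    intro y hy z hz
    change (y + z) - (2 : ℂ) • p (y + z) = -y + z
    rw [map_add, show p y = y from Submodule.projection_apply_of_mem_left hm1 hy,
      show p z = 0 from Submodule.projection_apply_of_mem_right hm1 hz]
    module
  have hσmem : σ ∈ isoStab B H := by
    constructor
    · intro v w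
      obtain ⟨y, hy, z, hz, rfl⟩ := hdec v
      obtain ⟨y', hy', z', hz', rfl⟩ := hdec w
      rw [hσ y hy z hz, hσ y' hy' z' hz']
      have e1 := hKL y hy z' hz'
      have e2 := hKL y' hy' z hz
      rw [hsymm] at e2
      simp only [map_add, map_neg, LinearMap.add_apply, LinearMap.neg_apply]
      linear_combination -2 * e1 - 2 * e2
    · intro x hx
      obtain ⟨y, hy, z, hz, hyz⟩ := Submodule.mem_sup.1
        (hm2.sup_eq_top ▸ Submodule.mem_top : (⟨x, hx⟩ : H) ∈ _ ⊔ _)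
      have hpow : ∀ u : H, ((((f.restrict hfH) ^ m) u : H) : V) = (f ^ m) u := by
        intro u
        rw [Module.End.pow_restrict]
        rfl
      have hy' : (y : V) ∈ K := by
        rw [hK, LinearMap.mem_ker, ← hpow, LinearMap.mem_ker.1 hy]; rfl
      have hz' : (z : V) ∈ L := by
        obtain ⟨u, rfl⟩ := hz
        exact ⟨u, (hpow u).symm⟩
      have : x = (y : V) + z := (congrArg Subtype.val hyz).symm
      rw [this, hσ _ hy' _ hz']
      exact H.add_mem (H.neg_mem y.2) z.2
  refine ⟨σ, hσmem, ?_, ?_⟩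
  · ext x
    obtain ⟨y, hy, z, hz, rfl⟩ := hdec x
    rw [mul_apply_eq_comp, hσ y hy z hz, hσ _ (K.neg_mem hy) z hz, neg_neg]
    rfl
  · refine joinedIn_of_cayley (isoStab_mul hσmem hg) fun x hx => ?_
    obtain ⟨y, hy, z, hz, rfl⟩ := hdec x
    have hgy : g y ∈ K := by
      rw [hK, LinearMap.mem_ker, hcomm, LinearMap.mem_ker.1 hy, map_zero]
    have hgz : g z ∈ L := by
      obtain ⟨u, rfl⟩ := hz
      exact ⟨g u, hcomm m u⟩
    rw [mul_apply_eq_comp, map_add, hσ _ hgy _ hgz] at hx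
    -- The `K`- and `L`-components of the eigenvector equation.
    have hsum : (y - g y) = -(z + g z) := by
      rw [← sub_eq_zero] at hx ⊢
      rw [← hx]; abel
    have hy0 : y - g y = 0 := Submodule.disjoint_def.1 hm1.disjoint _ (K.sub_mem hy hgy)
      (hsum ▸ L.neg_mem (L.add_mem hz hgz))
    have hz0 : f z = 0 := by
      rw [hy0, eq_comm, neg_eq_zero] at hsum
      rw [hfx, add_comm, hsum]
    have hfy : ∀ j : ℕ, (f ^ j) y = (2 : ℂ) ^ j • y := by
      intro j
      induction j with
      | zero => simp
      | succ j ih =>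
        rw [pow_succ', Module.End.mul_apply, ih, map_smul, hfx, ← sub_eq_zero.1 hy0, pow_succ,
          mul_smul, two_smul]
    have hy00 : y = 0 := by
      have := hfy m
      rw [LinearMap.mem_ker.1 hy, eq_comm] at this
      exact (smul_eq_zero.1 this).resolve_left (pow_ne_zero _ two_ne_zero)
    have hz00 : z = 0 := by
      refine Submodule.disjoint_def.1 hm1.disjoint z ?_ hz
      rw [hK, LinearMap.mem_ker, ← Nat.sub_add_cancel h0, pow_succ, Module.End.mul_apply, hz0,
        map_zero]
    rw [hy00, hz00, add_zero]

end Fitting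

/-! ### Connecting involutions to the identity -/

section Polarization

variable {V : Type*} [NormedAddCommGroup V] [NormedSpace ℂ V] {B : V →ₗ[ℂ] V →ₗ[ℂ] ℂ}

/-- Polarization: a subspace on which the form does not vanish contains a unit vector. -/
lemma exists_unit (hsymm : ∀ v w, B v w = B w v) (W : Submodule ℂ V)
    (h : ∃ x ∈ W, ∃ y ∈ W, B x y ≠ 0) : ∃ a ∈ W, B a a = 1 := by
  have key : ∃ a ∈ W, B a a ≠ 0 := by
    by_contra hcon
    push Not at hcon
    obtain ⟨x, hx, y, hy, hxy⟩ := h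
    have h1 := hcon _ (W.add_mem hx hy)
    have h2 := hcon x hx
    have h3 := hcon y hy
    simp only [map_add, LinearMap.add_apply] at h1
    rw [hsymm y x] at h1
    exact hxy (by linear_combination (h1 - h2 - h3) / 2)
  obtain ⟨a, ha, haa⟩ := key
  obtain ⟨s, hs⟩ := IsAlgClosed.exists_pow_nat_eq (B a a) (n := 2) two_pos
  have hs0 : s ≠ 0 := by
    rintro rfl
    exact haa (by rw [← hs]; norm_num)
  refine ⟨s⁻¹ • a, W.smul_mem _ ha, ?_⟩
  simp only [map_smul, LinearMap.smul_apply, smul_eq_mul, ← hs]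
  field_simp

lemma hyperbolic_of_orthonormal (hsymm : ∀ v w, B v w = B w v) {a b : V} (ha : B a a = 1)
    (hb : B b b = 1) (hab : B a b = 0) :
    B ((2⁻¹ : ℂ) • (a + Complex.I • b)) ((2⁻¹ : ℂ) • (a + Complex.I • b)) = 0 ∧
    B (a - Complex.I • b) (a - Complex.I • b) = 0 ∧
    B ((2⁻¹ : ℂ) • (a + Complex.I • b)) (a - Complex.I • b) = 1 := by
  have hba : B b a = 0 := (hsymm b a).trans hab
  have hI := Complex.I_mul_I
  simp only [map_add, map_sub, map_smul, LinearMap.add_apply, LinearMap.sub_apply,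
    LinearMap.smul_apply, smul_eq_mul, ha, hb, hab, hba]
  refine ⟨?_, ?_, ?_⟩
  · linear_combination (1 / 4) * hI
  · linear_combination hI
  · linear_combination (-1 / 2) * hI

end Polarization

section Involution

variable {V : Type*} [NormedAddCommGroup V] [NormedSpace ℂ V] [FiniteDimensional ℂ V]
  {B : V →ₗ[ℂ] V →ₗ[ℂ] ℂ} {H : Submodule ℂ V}

/-- The rank-one endomorphism `x ↦ ⟨x, a⟩ b`. -/
noncomputable def rankOne (B : V →ₗ[ℂ] V →ₗ[ℂ] ℂ) (a b : V) : V →L[ℂ] V :=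
  LinearMap.toContinuousLinearMap ((B.flip a).smulRight b)

lemma rankOne_apply (a b x : V) : rankOne B a b x = B x a • b := rfl

/-- The orthogonal reflection in the hyperplane `a^⊥`, for `⟨a, a⟩ = 1`. -/
noncomputable def hyperRefl (B : V →ₗ[ℂ] V →ₗ[ℂ] ℂ) (a : V) : V →L[ℂ] V :=
  1 - (2 : ℂ) • rankOne B a a

lemma hyperRefl_apply (a x : V) : hyperRefl B a x = x - (2 * B x a) • a := by
  rw [mul_smul]; rfl

lemma det_hyperRefl {a : V} (ha : B a a = 1) : LinearMap.det (hyperRefl B a : V →ₗ[ℂ] V) = -1 := by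
  have : (hyperRefl B a : V →ₗ[ℂ] V) = LinearMap.transvection ((-2 : ℂ) • B.flip a) a := by
    ext x
    rw [LinearMap.transvection.apply, ContinuousLinearMap.coe_coe, hyperRefl_apply,
      LinearMap.smul_apply, LinearMap.flip_apply]
    simp [sub_eq_add_neg]
  rw [this, LinearMap.transvection.det, LinearMap.smul_apply, LinearMap.flip_apply, ha]
  norm_num

lemma isoStab_hyperRefl (hsymm : ∀ v w, B v w = B w v) {a : V} (ha : B a a = 1)
    (haH : a ∈ H ∨ a ∈ bperp B H) : hyperRefl B a ∈ isoStab B H := by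
  constructor
  · intro v w
    rw [hyperRefl_apply, hyperRefl_apply]
    simp only [map_sub, map_smul, LinearMap.sub_apply, LinearMap.smul_apply, smul_eq_mul, ha]
    rw [hsymm a w]
    ring
  · intro x hx
    rw [hyperRefl_apply]
    rcases haH with h | h
    · exact H.sub_mem hx (H.smul_mem _ h)
    · rw [hsymm, h x hx]; simpa using hx

/-- For a hyperbolic pair `u, v`, the torus acting by `t` on `u`, by `t⁻¹` on `v` and trivially
on the orthogonal complement of both. -/
noncomputable def torus (B : V →ₗ[ℂ] V →ₗ[ℂ] ℂ) (u v : V) (t : ℂ) : V →L[ℂ] V :=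
  1 + (t - 1) • rankOne B v u + (t⁻¹ - 1) • rankOne B u v

lemma torus_apply (u v : V) (t : ℂ) (x : V) :
    torus B u v t x = x + (t - 1) • B x v • u + (t⁻¹ - 1) • B x u • v := rfl

/-- The isometry `-1` on the plane of a hyperbolic pair is joined to the identity in the
stabilizer of `H` as soon as the torus of the pair stabilizes `H`. -/
lemma joinedIn_torus (hsymm : ∀ v w, B v w = B w v) {u v : V} (hu : B u u = 0) (hv : B v v = 0)
    (huv : B u v = 1)
    (hH : u ∈ H ⊓ bperp B H ∨ (u ∈ H ∧ v ∈ H) ∨ (u ∈ bperp B H ∧ v ∈ bperp B H)) :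
    JoinedIn (isoStab B H) 1 (torus B u v (-1)) := by
  have h1 : torus B u v 1 = 1 := by
    ext x; rw [torus_apply]; simp
  rw [← h1]
  refine joinedIn_family (F := {0}) (Set.finite_singleton 0) ?_ ?_ (by simp) (by simp)
  · have : ContinuousOn (fun t : ℂ => t⁻¹) {0}ᶜ := continuousOn_inv₀
    unfold torus
    fun_prop
  · intro t ht
    have ht0 : t ≠ 0 := by simpa using ht
    have hvu : B v u = 1 := (hsymm v u).trans huv
    constructor
    · intro x y
      rw [torus_apply, torus_apply]
      simp only [map_add, map_smul, LinearMap.add_apply, LinearMap.smul_apply, smul_eq_mul,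
        hu, hv, huv, hvu, hsymm u y, hsymm v y]
      field_simp
      ring
    · intro x hx
      rw [torus_apply]
      rcases hH with h | h | h
      · have : B x u = 0 := (hsymm x u).trans (h.2 x hx)
        rw [this, zero_smul, smul_zero, add_zero]
        exact H.add_mem hx (H.smul_mem _ (H.smul_mem _ h.1))
      · exact H.add_mem (H.add_mem hx (H.smul_mem _ (H.smul_mem _ h.1)))
          (H.smul_mem _ (H.smul_mem _ h.2))
      · have e1 : B x u = 0 := (hsymm x u).trans (h.1 x hx)
        have e2 : B x v = 0 := (hsymm x v).trans (h.2 x hx)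
        simpa [e1, e2] using hx

/-- A nontrivial stabilizing involution that has determinant `1` and does not act on `H` as a
reflection has, inside its `-1`-eigenspace, a hyperbolic pair whose torus stabilizes `H`. The pair
is taken with `u` in the radical of `H` if possible, otherwise inside `H`, otherwise inside
`H^⊥`; the two assumptions exclude that the intersection of the `-1`-eigenspace with `H`, or that
eigenspace itself, is a line spanned by a unit vector. -/
lemma exists_hyperbolic (hB : ∀ v, (∀ w, B v w = 0) → v = 0) (hsymm : ∀ v w, B v w = B w v)
    {σ : V →L[ℂ] V} (hσ : σ ∈ isoStab B H) (hσ2 : ∀ x, σ (σ x) = x)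
    (hne : ∃ x, x ≠ 0 ∧ σ x = -x)
    (hd : ∀ a ∈ H, B a a = 1 → ¬ ∀ x ∈ H, σ x = x - (2 * B x a) • a)
    (hdet : LinearMap.det (σ : V →ₗ[ℂ] V) = 1) :
    ∃ u v, σ u = -u ∧ σ v = -v ∧ B u u = 0 ∧ B v v = 0 ∧ B u v = 1 ∧
      (u ∈ H ⊓ bperp B H ∨ (u ∈ H ∧ v ∈ H) ∨ (u ∈ bperp B H ∧ v ∈ bperp B H)) := by
  let N : Submodule ℂ V := LinearMap.ker ((σ : V →ₗ[ℂ] V) + 1)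
  have hN : ∀ x, x ∈ N ↔ σ x = -x := fun x => by
    rw [LinearMap.mem_ker]
    exact add_eq_zero_iff_eq_neg
  -- `x - σ x` is twice the component of `x` in the `-1`-eigenspace.
  have hproj : ∀ x, x - σ x ∈ N := fun x => by rw [hN, map_sub, hσ2]; abel
  have hprojB : ∀ y ∈ N, ∀ x, B y (x - σ x) = 2 * B y x := by
    intro y hy x
    have := hσ.1 y x
    rw [(hN y).1 hy, map_neg, LinearMap.neg_apply] at this
    rw [map_sub]
    linear_combination this
  -- A reflection formula, when the `-1`-part of `x` is a multiple of the unit vector `a`.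
  have hreflect : ∀ a ∈ N, B a a = 1 → ∀ x, (x - σ x) - B (x - σ x) a • a = 0 →
      σ x = x - (2 * B x a) • a := by
    intro a ha haa x hx
    rw [hsymm, hprojB a ha, hsymm, sub_eq_zero] at hx
    rw [← hx]; abel
  -- A pair inside a subspace `W` of the `-1`-eigenspace, from two orthonormal vectors.
  have hpair : ∀ W ≤ N, ∀ a ∈ W, B a a = 1 →
      (∃ y ∈ W, ∃ z ∈ W, B y a = 0 ∧ B z a = 0 ∧ B y z ≠ 0) →
      ∃ u ∈ W, ∃ v ∈ W, B u u = 0 ∧ B v v = 0 ∧ B u v = 1 := by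
    rintro W hW a ha haa ⟨y, hy, z, hz, hya, hza, hyz⟩
    obtain ⟨b, hb, hbb⟩ := exists_unit hsymm (W ⊓ LinearMap.ker (B.flip a))
      ⟨y, ⟨hy, hya⟩, z, ⟨hz, hza⟩, hyz⟩
    have hab : B a b = 0 := (hsymm a b).trans hb.2
    obtain ⟨h1, h2, h3⟩ := hyperbolic_of_orthonormal hsymm haa hbb hab
    exact ⟨_, W.smul_mem _ (W.add_mem ha (W.smul_mem _ hb.1)), _,
      W.sub_mem ha (W.smul_mem _ hb.1), h1, h2, h3⟩
  have hsubB : ∀ a, B a a = 1 → ∀ y, B (y - B y a • a) a = 0 := by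
    intro a haa y
    simp [haa]
  by_cases hR : ∃ x ∈ N ⊓ (H ⊓ bperp B H), x ≠ 0
  · obtain ⟨u, ⟨huN, huR⟩, hu0⟩ := hR
    have : ∃ w, B u w ≠ 0 := by
      by_contra hcon
      push Not at hcon
      exact hu0 (hB u hcon)
    obtain ⟨w, hw⟩ := this
    have huu : B u u = 0 := huR.2 u huR.1
    -- Rescale the `-1`-part of `w` so that it pairs to `1` with `u`, then correct it by a
    -- multiple of `u` to make it isotropic.
    let w' := (2 * B u w)⁻¹ • (w - σ w)
    have hw'N : w' ∈ N := N.smul_mem _ (hproj w)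
    have huw' : B u w' = 1 := by
      simp only [w']
      rw [map_smul, hprojB u huN, smul_eq_mul, inv_mul_cancel₀ (by simpa using hw)]
    have hw'u : B w' u = 1 := (hsymm _ _).trans huw'
    let v := w' - (2⁻¹ * B w' w') • u
    have hvN : v ∈ N := N.sub_mem hw'N (N.smul_mem _ huN)
    refine ⟨u, v, (hN u).1 huN, (hN v).1 hvN, huu, ?_, ?_, Or.inl huR⟩
    · simp only [v, map_sub, map_smul, LinearMap.sub_apply, LinearMap.smul_apply, smul_eq_mul,
        huu, huw', hw'u]
      ring
    · simp only [v, map_sub, map_smul, smul_eq_mul, huu, huw']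
      ring
  · push Not at hR
    have hHN : ∀ x ∈ H, x - σ x ∈ N ⊓ H := fun x hx =>
      ⟨hproj x, H.sub_mem hx (hσ.2 x hx)⟩
    -- The form is nondegenerate on `N ∩ H`.
    have hrad : ∀ y ∈ N ⊓ H, (∀ z ∈ N ⊓ H, B y z = 0) → y = 0 := by
      intro y hy hyz
      refine hR y ⟨hy.1, hy.2, fun x hx => ?_⟩
      have := hyz _ (hHN x hx)
      rw [hprojB y hy.1] at this
      simpa using this
    by_cases hH0 : ∃ x ∈ N ⊓ H, x ≠ 0
    · obtain ⟨x, hx, hx0⟩ := hH0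
      have : ∃ y ∈ N ⊓ H, B x y ≠ 0 := by
        by_contra hcon
        push Not at hcon
        exact hx0 (hrad x hx hcon)
      obtain ⟨y, hy, hxy⟩ := this
      obtain ⟨a, ha, haa⟩ := exists_unit hsymm (N ⊓ H) ⟨x, hx, y, hy, hxy⟩
      have hex : ∃ y ∈ N ⊓ H, ∃ z ∈ N ⊓ H, B y a = 0 ∧ B z a = 0 ∧ B y z ≠ 0 := by
        by_contra hcon
        push Not at hcon
        refine hd a ha.2 haa fun x hx => hreflect a ha.1 haa x ?_
        have hmem : ∀ y ∈ N ⊓ H, y - B y a • a ∈ N ⊓ H := fun y hy =>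
          (N ⊓ H).sub_mem hy ((N ⊓ H).smul_mem _ ha)
        refine hrad _ (hmem _ (hHN x hx)) fun z hz => ?_
        have := hcon _ (hmem _ (hHN x hx)) _ (hmem z hz) (hsubB a haa _) (hsubB a haa _)
        rw [map_sub, map_smul, hsubB a haa, smul_zero, sub_zero] at this
        exact this
      obtain ⟨u, hu, v, hv, h1, h2, h3⟩ := hpair (N ⊓ H) inf_le_left a ha haa hex
      exact ⟨u, v, (hN u).1 hu.1, (hN v).1 hv.1, h1, h2, h3, Or.inr (Or.inl ⟨hu.2, hv.2⟩)⟩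
    · push Not at hH0
      -- Now `σ` is trivial on `H`, so its `-1`-eigenspace lies in `H^⊥`.
      have hNperp : N ≤ bperp B H := by
        intro y hy x hx
        have := hprojB y hy x
        rw [hH0 _ (hHN x hx), map_zero] at this
        simpa using this.symm
      have hradN : ∀ y ∈ N, (∀ z ∈ N, B y z = 0) → y = 0 := by
        intro y hy hyz
        refine hB y fun x => ?_
        have := hyz _ (hproj x)
        rw [hprojB y hy] at this
        simpa using this
      obtain ⟨x, hx0, hx⟩ := hne
      have : ∃ y ∈ N, B x y ≠ 0 := by
        by_contra hcon
        push Not at hcon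
        exact hx0 (hradN x ((hN x).2 hx) hcon)
      obtain ⟨y, hy, hxy⟩ := this
      obtain ⟨a, ha, haa⟩ := exists_unit hsymm N ⟨x, (hN x).2 hx, y, hy, hxy⟩
      have hex : ∃ y ∈ N, ∃ z ∈ N, B y a = 0 ∧ B z a = 0 ∧ B y z ≠ 0 := by
        by_contra hcon
        push Not at hcon
        have hmem : ∀ y ∈ N, y - B y a • a ∈ N := fun y hy =>
          N.sub_mem hy (N.smul_mem _ ha)
        have hσa : σ = hyperRefl B a := by
          ext x
          rw [hyperRefl_apply]
          refine hreflect a ha haa x (hradN _ (hmem _ (hproj x)) fun z hz => ?_)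
          have := hcon _ (hmem _ (hproj x)) _ (hmem z hz) (hsubB a haa _) (hsubB a haa _)
          rw [map_sub, map_smul, hsubB a haa, smul_zero, sub_zero] at this
          exact this
        rw [hσa, det_hyperRefl haa] at hdet
        norm_num at hdet
      obtain ⟨u, hu, v, hv, h1, h2, h3⟩ := hpair N le_rfl a ha haa hex
      exact ⟨u, v, (hN u).1 hu, (hN v).1 hv, h1, h2, h3,
        Or.inr (Or.inr ⟨hNperp hu, hNperp hv⟩)⟩

/-- Stabilizing involutions with trivial characters are joined to the identity: each hyperbolic
pair in the `-1`-eigenspace is rotated away, which lowers the dimension of that eigenspace. -/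
lemma joinedIn_involution (hB : ∀ v, (∀ w, B v w = 0) → v = 0)
    (hsymm : ∀ v w, B v w = B w v) {d : (V →L[ℂ] V) → ℂ} (hdc : Continuous d) (hd1 : d 1 = 1)
    (hdm : ∀ g ∈ isoStab B H, ∀ h ∈ isoStab B H, d (g * h) = d g * d h)
    (hds : ∀ g ∈ isoStab B H, d g ^ 2 = 1)
    (hdr : ∀ (g : V →L[ℂ] V) (a : V), a ∈ H → B a a = 1 →
        (∀ x ∈ H, g x = x - (2 * B x a) • a) → d g = -1) (m : ℕ) :
    ∀ σ ∈ isoStab B H, (∀ x, σ (σ x) = x) → d σ = 1 → LinearMap.det (σ : V →ₗ[ℂ] V) = 1 →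
      finrank ℂ (LinearMap.ker ((σ : V →ₗ[ℂ] V) + 1)) ≤ m → JoinedIn (isoStab B H) 1 σ := by
  have hmem : ∀ (τ : V →L[ℂ] V) x, x ∈ LinearMap.ker ((τ : V →ₗ[ℂ] V) + 1) ↔ τ x = -x :=
    fun τ x => by
      rw [LinearMap.mem_ker]
      exact add_eq_zero_iff_eq_neg
  induction m with
  | zero =>
    intro σ hσ _ _ _ hm
    have hbot := Submodule.finrank_eq_zero.1 (Nat.le_zero.1 hm)
    refine joinedIn_of_cayley hσ fun x hx => ?_
    rw [← hmem, hbot] at hx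
    exact hx
  | succ m ih =>
    intro σ hσ hσ2 hdσ hdet hm
    by_cases hne : ∃ x, x ≠ 0 ∧ σ x = -x
    swap
    · push Not at hne
      exact joinedIn_of_cayley hσ fun x hx => by_contra fun h0 => hne x h0 hx
    obtain ⟨u, v, hu, hv, huu, hvv, huv, hH⟩ := exists_hyperbolic hB hsymm hσ hσ2 hne
      (fun a ha haa hx => by
        have := hdr σ a ha haa hx
        rw [hdσ] at this
        norm_num at this) hdet
    have hvu : B v u = 1 := (hsymm v u).trans huv
    have hj := joinedIn_torus hsymm huu hvv huv hH
    set τ := torus B u v (-1) with hτ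
    have hτx : ∀ x, τ x = x - (2 * B x v) • u - (2 * B x u) • v := by
      intro x
      rw [hτ, torus_apply, inv_neg_one]
      module
    have hτmem := hj.target_mem
    have hτd : d τ = 1 := by
      rw [← joinedIn_const hj hdc hds, hd1]
    have hτdet : LinearMap.det (τ : V →ₗ[ℂ] V) = 1 := by
      have := joinedIn_const hj ContinuousLinearMap.continuous_det
        (det_sq_isoStab hB hsymm)
      exact this.symm.trans LinearMap.det_id
    have hτu : τ u = -u := by rw [hτx, huu, huv]; module
    have hτv : τ v = -v := by rw [hτx, hvv, hvu]; module
    have hττ : ∀ x, τ (τ x) = x := by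
      intro x
      conv_lhs => rw [hτx x]
      rw [map_sub, map_sub, map_smul, map_smul, hτu, hτv, hτx]
      module
    have hστ : ∀ x, σ (τ x) = τ (σ x) := by
      intro x
      have e1 : B (σ x) u = -B x u := by
        have := hσ.1 x u
        rw [hu, map_neg] at this
        linear_combination -this
      have e2 : B (σ x) v = -B x v := by
        have := hσ.1 x v
        rw [hv, map_neg] at this
        linear_combination -this
      rw [hτx, hτx, map_sub, map_sub, map_smul, map_smul, hu, hv, e1, e2]
      module
    have hmul := isoStab_mul hσ hτmem
    have hlt : LinearMap.ker (((σ * τ : V →L[ℂ] V) : V →ₗ[ℂ] V) + 1) <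
        LinearMap.ker ((σ : V →ₗ[ℂ] V) + 1) := by
      refine lt_of_le_of_ne (fun x hx => ?_) fun heq => ?_
      · rw [hmem] at hx ⊢
        have hsu : (σ * τ) u = u := by rw [mul_apply_eq_comp, hτu, map_neg, hu, neg_neg]
        have hsv : (σ * τ) v = v := by rw [mul_apply_eq_comp, hτv, map_neg, hv, neg_neg]
        have e1 : B x u = 0 := by
          have := hmul.1 x u
          rw [hsu, hx, map_neg, LinearMap.neg_apply] at this
          linear_combination (-1 / 2) * this
        have e2 : B x v = 0 := by
          have := hmul.1 x v
          rw [hsv, hx, map_neg, LinearMap.neg_apply] at this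
          linear_combination (-1 / 2) * this
        rw [mul_apply_eq_comp, hτx, e1, e2] at hx
        simpa using hx
      · have h1 := (hmem σ u).2 hu
        rw [← heq, hmem, mul_apply_eq_comp, hτu, map_neg, hu, neg_neg] at h1
        have h2 : (2 : ℂ) • u = 0 := by rw [two_smul]; nth_rewrite 1 [h1]; simp
        have hu0 : u = 0 := (smul_eq_zero.1 h2).resolve_left two_ne_zero
        rw [hu0] at huv
        simp at huv
    have hrec := ih (σ * τ) hmul
      (fun x => by
        rw [mul_apply_eq_comp, mul_apply_eq_comp, ← hστ, hσ2, hττ])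
      (by rw [hdm σ hσ τ hτmem, hdσ, hτd, one_mul])
      (by
        have := LinearMap.det_comp (σ : V →ₗ[ℂ] V) (τ : V →ₗ[ℂ] V)
        rw [hdet, hτdet, one_mul] at this
        exact this)
      (by have := Submodule.finrank_lt_finrank_of_lt hlt; omega)
    have : σ * τ * τ = σ := by
      ext x
      simp only [mul_apply_eq_comp, hττ]
    rw [← this]
    exact joinedIn_mul hrec hj

end Involution

/-! ### Counting components -/

/-- Proposition 3.9(3) (`prop:orbit-orth`), disconnected case: for a nondegenerate symmetric
form, if `dim H = k`, `dim (H ∩ H^⊥) = k - r` and `max {0, 2k - n} < r`, then the stabilizer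
of `H` in `SO(V)` has exactly two connected components.  (The canonical topology of the
finite-dimensional space `End V` is realized via an arbitrary norm on `V`.) -/
theorem stmt_7 {V : Type*} [NormedAddCommGroup V] [NormedSpace ℂ V] [FiniteDimensional ℂ V]
    (n : ℕ) (hn : finrank ℂ V = n)
    (B : V →ₗ[ℂ] V →ₗ[ℂ] ℂ)
    (hB : ∀ v, (∀ w, B v w = 0) → v = 0)
    (hsymm : ∀ v w, B v w = B w v)
    (H : Submodule ℂ V) (k r : ℕ) (hk : finrank ℂ H = k)
    (hrad : (finrank ℂ ↥(H ⊓ bperp B H) : ℤ) = (k : ℤ) - r)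
    (hr : max 0 (2 * (k : ℤ) - n) < (r : ℤ)) :
    Nat.card (ConnectedComponents
      {g : V →L[ℂ] V // Function.Bijective g ∧ (∀ v w, B (g v) (g w) = B v w) ∧
        LinearMap.det (g : V →ₗ[ℂ] V) = 1 ∧
        Submodule.map (g : V →ₗ[ℂ] V) H = H}) = 2 := by
  obtain ⟨d, hdc, hd1, hdm, hds, hdr⟩ := exists_quotient_det (H := H) hB hsymm
  have hnd := nondegenerate_of_symm B hB hsymm
  have hperp : bperp B H = LinearMap.BilinForm.orthogonal B H := by
    ext x
    exact ⟨fun h w hw => (hsymm w x).trans (h w hw), fun h w hw => (hsymm x w).trans (h w hw)⟩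
  have hr0 : 0 < (r : ℤ) := lt_of_le_of_lt (le_max_left _ _) hr
  have hr1 : 2 * (k : ℤ) - n < r := lt_of_le_of_lt (le_max_right _ _) hr
  -- `H` is not totally isotropic, since `r > 0`.
  obtain ⟨a, haH, haa⟩ : ∃ a ∈ H, B a a = 1 := by
    refine exists_unit hsymm H ?_
    by_contra hcon
    push Not at hcon
    have : H ⊓ bperp B H = H := inf_eq_left.2 fun x hx w hw => hcon x hx w hw
    rw [this, hk] at hrad
    omega
  -- `H^⊥` is not totally isotropic, since otherwise it would lie in `H^⊥⊥ = H`, forcing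
  -- `n - k = k - r`.
  obtain ⟨c, hcH, hcc⟩ : ∃ c ∈ bperp B H, B c c = 1 := by
    refine exists_unit hsymm _ ?_
    by_contra hcon
    push Not at hcon
    have hle : bperp B H ≤ H := by
      intro x hx
      rw [← LinearMap.BilinForm.orthogonal_orthogonal hnd
        (fun x y h => (hsymm y x).trans h) H, ← hperp]
      exact fun w hw => hcon w hw x hx
    rw [inf_eq_right.2 hle, hperp, LinearMap.BilinForm.finrank_orthogonal hnd, hn, hk] at hrad
    have : k ≤ n := hk ▸ hn ▸ Submodule.finrank_le H
    omega
  have hac : B a c = 0 := (hsymm a c).trans (hcH a haH)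
  have hca : B c a = 0 := hcH a haH
  have hsa := isoStab_hyperRefl hsymm haa (Or.inl haH)
  have hsc := isoStab_hyperRefl hsymm hcc (Or.inr hcH)
  -- `ρ` lies in the stabilizer, has determinant `1`, and acts on `H` as a reflection.
  set ρ : V →L[ℂ] V := hyperRefl B a * hyperRefl B c with hρ
  have hρmem : ρ ∈ isoStab B H := isoStab_mul hsa hsc
  have hρx : ∀ x, ρ x = x - (2 * B x a) • a - (2 * B x c) • c := by
    intro x
    rw [hρ, mul_apply_eq_comp, hyperRefl_apply, hyperRefl_apply]
    simp only [map_sub, map_smul, LinearMap.sub_apply, LinearMap.smul_apply, hca, smul_eq_mul,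
      mul_zero, sub_zero]
    abel
  have hρρ : ρ * ρ = 1 := by
    ext x
    rw [mul_apply_eq_comp, hρx, hρx x]
    simp only [map_sub, map_smul, LinearMap.sub_apply, LinearMap.smul_apply, smul_eq_mul, hca,
      hac, haa, hcc, one_apply_eq_self]
    module
  have hρdet : LinearMap.det (ρ : V →ₗ[ℂ] V) = 1 := by
    have := LinearMap.det_comp (hyperRefl B a : V →ₗ[ℂ] V) (hyperRefl B c : V →ₗ[ℂ] V)
    rw [det_hyperRefl haa, det_hyperRefl hcc] at this
    refine Eq.trans this (by norm_num)
  have hρd : d ρ = -1 := by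
    refine hdr ρ a haH haa fun x hx => ?_
    rw [hρx, (hsymm x c).trans (hcH x hx)]
    simp
  -- Elements with both characters trivial are joined to the identity.
  have hmain : ∀ g ∈ isoStab B H, LinearMap.det (g : V →ₗ[ℂ] V) = 1 → d g = 1 →
      JoinedIn (isoStab B H) 1 g := by
    intro g hg hgdet hgd
    obtain ⟨σ, hσ, hσσ, hj⟩ := exists_involution hB hsymm hg
    have h1 : d (σ * g) = 1 := by rw [← joinedIn_const hj hdc hds, hd1]
    have h2 : LinearMap.det ((σ * g : V →L[ℂ] V) : V →ₗ[ℂ] V) = 1 :=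
      (joinedIn_const hj ContinuousLinearMap.continuous_det
        (det_sq_isoStab hB hsymm)).symm.trans LinearMap.det_id
    rw [hdm σ hσ g hg, hgd, mul_one] at h1
    have h3 := LinearMap.det_comp (σ : V →ₗ[ℂ] V) (g : V →ₗ[ℂ] V)
    rw [hgdet, mul_one] at h3
    have hσj := joinedIn_involution hB hsymm hdc hd1 hdm hds hdr _ σ hσ
      (fun x => congrArg (fun q : V →L[ℂ] V => q x) hσσ) h1 (h3.symm.trans h2) le_rfl
    have := joinedIn_mul hσj hj
    rwa [← mul_assoc, hσσ, one_mul] at this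
  set p : (V →L[ℂ] V) → Prop := fun g => Function.Bijective g ∧
    (∀ v w, B (g v) (g w) = B v w) ∧ LinearMap.det (g : V →ₗ[ℂ] V) = 1 ∧
    Submodule.map (g : V →ₗ[ℂ] V) H = H with hp
  have hpiff : ∀ g, p g ↔ g ∈ isoStab B H ∧ LinearMap.det (g : V →ₗ[ℂ] V) = 1 := by
    intro g
    constructor
    · rintro ⟨-, h1, h2, h3⟩
      exact ⟨⟨h1, fun x hx => h3 ▸ Submodule.mem_map_of_mem hx⟩, h2⟩
    · rintro ⟨h1, h2⟩
      have hi := isoStab_injective hB h1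
      exact ⟨⟨hi, LinearMap.surjective_of_injective (f := (g : V →ₗ[ℂ] V)) hi⟩, h1.1, h2,
        isoStab_map_eq hB h1⟩
  have hp1 : p 1 := (hpiff 1).2 ⟨isoStab_one, LinearMap.det_id⟩
  have hpρ : p ρ := (hpiff ρ).2 ⟨hρmem, hρdet⟩
  -- The determinant is constant along a path in the full stabilizer.
  have hcomp : ∀ (g h : V →L[ℂ] V) (hg : p g) (hh : p h), JoinedIn (isoStab B H) g h →
      (ConnectedComponents.mk (⟨g, hg⟩ : {g // p g})) = ConnectedComponents.mk ⟨h, hh⟩ := by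
    intro g h hg hh hj
    have hj' : JoinedIn {g | p g} g h := by
      refine ⟨hj.somePath, fun t => (hpiff _).2 ⟨hj.somePath_mem t, ?_⟩⟩
      exact (joinedIn_somePath_const hj ContinuousLinearMap.continuous_det
        (det_sq_isoStab hB hsymm) t).symm.trans ((hpiff g).1 hg).2
    have hjs : Joined (⟨g, hg⟩ : {g // p g}) ⟨h, hh⟩ := hj'.joined_subtype
    rw [ConnectedComponents.coe_eq_coe']
    exact pathComponent_subset_component _ hjs.symm
  rw [Nat.card_eq_two_iff]
  refine ⟨ConnectedComponents.mk ⟨1, hp1⟩, ConnectedComponents.mk ⟨ρ, hpρ⟩, ?_, ?_⟩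
  · intro heq
    rw [ConnectedComponents.coe_eq_coe'] at heq
    have hT : IsDiscrete ({1, -1} : Set ℂ) := (Set.toFinite _).isDiscrete
    have := isPreconnected_connectedComponent.constant_of_mapsTo hT
      (f := fun g : {g // p g} => d g) (hdc.comp continuous_subtype_val).continuousOn
      (fun g _ => by
        simpa [sq, mul_self_eq_one_iff] using hds _ ((hpiff g).1 g.2).1)
      heq mem_connectedComponent
    simp only [hd1, hρd] at this
    norm_num at this
  · rw [Set.eq_univ_iff_forall]
    intro q
    obtain ⟨⟨g, hg⟩, rfl⟩ := ConnectedComponents.surjective_coe q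
    obtain ⟨hgm, hgdet⟩ := (hpiff g).1 hg
    rcases mul_self_eq_one_iff.1 ((sq (d g)).symm.trans (hds g hgm)) with h | h
    · left
      exact (hcomp 1 g hp1 hg (hmain g hgm hgdet h)).symm
    · right
      have hgρ := isoStab_mul hgm hρmem
      have h1 : LinearMap.det ((g * ρ : V →L[ℂ] V) : V →ₗ[ℂ] V) = 1 := by
        refine (LinearMap.det_comp (g : V →ₗ[ℂ] V) (ρ : V →ₗ[ℂ] V)).trans ?_
        rw [hgdet, hρdet, one_mul]
      have h2 : d (g * ρ) = 1 := by rw [hdm g hgm ρ hρmem, h, hρd]; norm_num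
      -- Right translation by `ρ` moves the path from `1` to `g ρ` onto one from `ρ` to `g`.
      have h3 := (hmain _ hgρ h1 h2).map (f := fun x => x * ρ) (continuous_mul_const ρ)
      rw [one_mul, mul_assoc, hρρ, mul_one] at h3
      refine (hcomp ρ g hpρ hg (h3.mono ?_)).symm
      rintro _ ⟨x, hx, rfl⟩
      exact isoStab_mul hx hρmem
end

section
/- Assume the form ⟨−,−⟩ is symmetric (and nondegenerate). Let H ⊆ V be a subspace with dim H = k and dim(H ∩ H^⊥) = k − r, and assume r = max{0, 2k − n}. Then the stabilizer S = {g ∈ End(V) : g is an isometry of V, det g = 1, and g(H) = H} is a connected subset of End(V). -/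
/-!
The idea is to join every element of the stabilizer to the identity.

If `2k ≤ n`, the rank hypothesis says that `H` is totally isotropic; otherwise it says that
`H^⊥ ⊆ H`, so that `H^⊥` is totally isotropic, and `H^⊥` has the same stabilizer as `H` since
`H^⊥⊥ = H`. It therefore suffices to treat the stabilizer `S` of a totally isotropic subspace `K`.

An element `g` of `S` without eigenvalue `-1` is joined to `1` by the Cayley transform
`z ↦ (A (-z)) (A z)⁻¹`, `A z = (1 + z) + (1 - z) g`, which is defined on the complement of a finite
subset of `ℂ`, a connected set (`exists_preconnected_of_no_neg_one`).

For a general `g`, let `W` be the generalized eigenspace for `-1`, so that `V` is the orthogonal sum of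
`W` and a `g`-stable complement `W'`, compatibly with `K`. Since `det g = 1`, the dimension of `W` is
even, so `W` splits as `L ⊕ L'` with `L`, `L'` totally isotropic and `K ∩ W ⊆ L`; only the stability of
`K ∩ W` under the corresponding involution is needed (`exists_skew_involution`). The rotations acting by
`exp (iθ)` on `L`, by `exp (-iθ)` on `L'` and trivially on `W'` lie in `S`. At `θ = π` the rotation is
`-1` on `W`, and its product with `g` has no eigenvalue `-1` (`exists_rot_mul_no_neg_one`).
-/


open Module

/-! ### Isometries, skew involutions and rotations -/

section Algebra

variable {V : Type*} [AddCommGroup V] [Module ℂ V]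

/-- The form identifies `V` with its dual, so the hypothesis says that `f`, conjugated to the dual
space, followed by the transpose of `g` is the transpose of `h`. -/
theorem det_mul_det_of_adjoint [FiniteDimensional ℂ V] {B : V →ₗ[ℂ] V →ₗ[ℂ] ℂ}
    (hB : ∀ v, (∀ w, B v w = 0) → v = 0) (f g h : V →ₗ[ℂ] V)
    (H : ∀ v w, B (f v) (g w) = B v (h w)) :
    LinearMap.det f * LinearMap.det g = LinearMap.det h := by
  have hker : LinearMap.ker B = ⊥ := by
    rw [LinearMap.ker_eq_bot']
    intro v hv
    exact hB v fun w => by rw [hv]; rfl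
  let e : V ≃ₗ[ℂ] Dual ℂ V :=
    LinearEquiv.ofInjectiveOfFinrankEq B (LinearMap.ker_eq_bot.mp hker)
      (Subspace.dual_finrank_eq (K := ℂ) (V := V)).symm
  have he : ∀ v, e v = B v := fun v => rfl
  have h1 : g.dualMap ∘ₗ ((e : V →ₗ[ℂ] Dual ℂ V) ∘ₗ f ∘ₗ (e.symm : Dual ℂ V →ₗ[ℂ] V)) =
      h.dualMap := by
    ext φ w
    obtain ⟨v, rfl⟩ := e.surjective φ
    have hs : e.symm (B v) = v := e.symm_apply_apply v
    simp [LinearMap.dualMap_apply, he, H, hs]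
  have h2 := congrArg LinearMap.det h1
  rw [LinearMap.det_comp, LinearMap.det_dualMap, LinearMap.det_dualMap, LinearMap.det_conj] at h2
  rw [← h2, mul_comm]

theorem map_eq_of_injective [FiniteDimensional ℂ V] (f : V →ₗ[ℂ] V) (K : Submodule ℂ V)
    (hK : ∀ x ∈ K, f x ∈ K) (hf : ∀ x ∈ K, f x = 0 → x = 0) : K.map f = K := by
  apply le_antisymm
  · rintro _ ⟨x, hx, rfl⟩
    exact hK x hx
  · intro y hy
    have hi : Function.Injective (f.restrict hK) := by
      rw [← LinearMap.ker_eq_bot, LinearMap.ker_eq_bot']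
      rintro ⟨x, hx⟩ h
      have h0 : f x = 0 := congrArg Subtype.val h
      exact Subtype.ext (hf x hx h0)
    obtain ⟨x, hx⟩ := LinearMap.surjective_of_injective hi ⟨y, hy⟩
    exact ⟨x, x.2, congrArg Subtype.val hx⟩

/-- On the affine line `a + t b` through two independent vectors the form is a quadratic polynomial
in `t`, which has a complex root. -/
theorem exists_isotropic {B : V →ₗ[ℂ] V →ₗ[ℂ] ℂ} (hsymm : ∀ v w, B v w = B w v)
    (W : Submodule ℂ V) [FiniteDimensional ℂ W] (hW : 2 ≤ finrank ℂ W) :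
    ∃ x ∈ W, x ≠ 0 ∧ B x x = 0 := by
  have h1 : 1 < finrank ℂ W := by omega
  have h0 : 0 < finrank ℂ W := by omega
  obtain ⟨⟨b, hb⟩, hb0⟩ := (finrank_pos_iff_exists_ne_zero (R := ℂ) (M := W)).mp h0
  obtain ⟨⟨a, ha⟩, hab⟩ := exists_linearIndependent_pair_of_one_lt_finrank h1 hb0
  have hb0' : b ≠ 0 := fun h => hb0 (Subtype.ext h)
  by_cases hbb : B b b = 0
  · exact ⟨b, hb, hb0', hbb⟩
  obtain ⟨s, hs⟩ := IsAlgClosed.exists_pow_nat_eq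
    (discrim (B b b) (2 * B a b) (B a a)) (n := 2) two_pos
  obtain ⟨t, ht⟩ := exists_quadratic_eq_zero hbb ⟨s, by rw [← hs, sq]⟩
  refine ⟨a + t • b, W.add_mem ha (W.smul_mem t hb), ?_, ?_⟩
  · intro h
    have := (LinearIndependent.pair_iff.mp hab) t 1
      (Subtype.ext (by simpa [add_comm] using h))
    exact one_ne_zero this.2
  · simp only [map_add, map_smul, LinearMap.add_apply, LinearMap.smul_apply, smul_eq_mul]
    rw [hsymm b a]
    linear_combination ht

/-- A nondegenerate even-dimensional `W` is a sum of two complementary totally isotropic subspaces,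
compatibly with the isotropic subspace `K`. These are encoded as the `± 1`-eigenspaces on `W` of a
skew-adjoint map `J` of the whole space. The proof splits off one
hyperbolic plane at a time. -/
theorem exists_skew_involution [FiniteDimensional ℂ V] {B : V →ₗ[ℂ] V →ₗ[ℂ] ℂ}
    (hB : ∀ v, (∀ w, B v w = 0) → v = 0) (hsymm : ∀ v w, B v w = B w v) (m : ℕ) :
    ∀ (W K : Submodule ℂ V), finrank ℂ W = 2 * m →
      (∀ w ∈ W, (∀ w' ∈ W, B w w' = 0) → w = 0) → K ≤ W → (∀ x ∈ K, ∀ y ∈ K, B x y = 0) →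
      ∃ J : V →ₗ[ℂ] V, (∀ v, J v ∈ W) ∧ (∀ w ∈ W, J (J w) = w) ∧
        (∀ v w, B (J v) w = - B v (J w)) ∧ ∀ x ∈ K, J x ∈ K := by
  induction m with
  | zero =>
    intro W K hW _ _ _
    have hW0 : W = ⊥ := Submodule.finrank_eq_zero.mp (by simpa using hW)
    refine ⟨0, by simp, ?_, by simp, by simp⟩
    intro w hw
    rw [hW0, Submodule.mem_bot] at hw
    simp [hw]
  | succ m ih =>
    intro W K hW hnd hKW hK
    obtain ⟨x, hxW, hx0, hxx, hxK⟩ : ∃ x ∈ W, x ≠ 0 ∧ B x x = 0 ∧ (K = ⊥ ∨ x ∈ K) := by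
      by_cases hK0 : K = ⊥
      · obtain ⟨x, h1, h2, h3⟩ := exists_isotropic hsymm W (by omega)
        exact ⟨x, h1, h2, h3, Or.inl hK0⟩
      · obtain ⟨x, h1, h2⟩ := Submodule.exists_mem_ne_zero_of_ne_bot hK0
        exact ⟨x, hKW h1, h2, hK x h1 x h1, Or.inr h1⟩
    -- an isotropic partner `y` of `x`
    obtain ⟨y, hyW, hxy, hyy⟩ : ∃ y ∈ W, B x y = 1 ∧ B y y = 0 := by
      have : ∃ u ∈ W, B x u ≠ 0 := by
        by_contra! h
        exact hx0 (hnd x hxW h)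
      obtain ⟨u, huW, hu⟩ := this
      set u' := (B x u)⁻¹ • u with hu'
      have h1 : B x u' = 1 := by simp [hu', hu]
      refine ⟨u' - (B u' u' / 2) • x, W.sub_mem (W.smul_mem _ huW) (W.smul_mem _ hxW), ?_, ?_⟩
      · simp [h1, hxx]
      · simp only [map_sub, map_smul, LinearMap.sub_apply, LinearMap.smul_apply, smul_eq_mul, hxx,
          hsymm u' x, h1]
        ring
    have hyx : B y x = 1 := by rw [hsymm, hxy]
    -- the orthogonal complement of the hyperbolic plane inside `W`
    let φ : W →ₗ[ℂ] ℂ × ℂ := ((B x).prod (B y)) ∘ₗ W.subtype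
    let W₁ : Submodule ℂ V := (LinearMap.ker φ).map W.subtype
    have hmem : ∀ w, w ∈ W₁ ↔ w ∈ W ∧ B x w = 0 ∧ B y w = 0 := by
      intro w
      constructor
      · rintro ⟨⟨w, hw⟩, h, rfl⟩
        have h' : φ ⟨w, hw⟩ = 0 := h
        exact ⟨hw, congrArg Prod.fst h', congrArg Prod.snd h'⟩
      · rintro ⟨h1, h2, h3⟩
        exact ⟨⟨w, h1⟩, Prod.ext h2 h3, rfl⟩
    have hφ : LinearMap.range φ = ⊤ := by
      rw [LinearMap.range_eq_top]
      rintro ⟨s, t⟩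
      refine ⟨⟨t • x + s • y, W.add_mem (W.smul_mem _ hxW) (W.smul_mem _ hyW)⟩, ?_⟩
      simp [φ, hxx, hxy, hyx, hyy]
    have hdim : finrank ℂ W₁ = 2 * m := by
      have h1 := LinearMap.finrank_range_add_finrank_ker φ
      have h2 : finrank ℂ W₁ = finrank ℂ (LinearMap.ker φ) :=
        Submodule.finrank_map_subtype_eq W _
      rw [hφ, finrank_top, finrank_prod, finrank_self, hW] at h1
      omega
    have hproj : ∀ w ∈ W, w - B w y • x - B w x • y ∈ W₁ := by
      intro w hw
      rw [hmem]
      refine ⟨W.sub_mem (W.sub_mem hw (W.smul_mem _ hxW)) (W.smul_mem _ hyW), ?_, ?_⟩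
      · simp [hxx, hxy, hsymm w x]
      · simp [hyy, hyx, hsymm w y]
    have hnd₁ : ∀ w ∈ W₁, (∀ w' ∈ W₁, B w w' = 0) → w = 0 := by
      intro w hw h
      obtain ⟨hwW, hxw, hyw⟩ := (hmem w).mp hw
      refine hnd w hwW fun w' hw' => ?_
      have := h _ (hproj w' hw')
      simpa [hsymm w x, hsymm w y, hxw, hyw] using this
    obtain ⟨J, hJW, hJJ, hJs, hJK⟩ := ih W₁ (K ⊓ W₁) hdim hnd₁ inf_le_right
      fun a ha b hb => hK a ha.1 b hb.1
    have hJx : J x = 0 := hB _ fun w => by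
      rw [hJs, ((hmem _).mp (hJW w)).2.1, neg_zero]
    have hJy : J y = 0 := hB _ fun w => by
      rw [hJs, ((hmem _).mp (hJW w)).2.2, neg_zero]
    let J' : V →ₗ[ℂ] V := J + (B y).smulRight x - (B x).smulRight y
    have hJ' : ∀ v, J' v = J v + B y v • x - B x v • y := fun v => by
      simp [J']
    refine ⟨J', fun v => ?_, fun w hw => ?_, fun v w => ?_, fun z hz => ?_⟩
    · rw [hJ']
      exact W.sub_mem (W.add_mem ((hmem _).mp (hJW v)).1 (W.smul_mem _ hxW)) (W.smul_mem _ hyW)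
    · have h1 := hJJ _ (hproj w hw)
      simp only [map_sub, map_smul, hJx, hJy, smul_zero, sub_zero] at h1
      have h2 := ((hmem _).mp (hJW w)).2.1
      have h3 := ((hmem _).mp (hJW w)).2.2
      rw [hJ', hJ']
      simp only [map_sub, map_smul, map_add, hJx, hJy, smul_zero, sub_zero, add_zero, h1, h2, h3,
        hxx, hxy, hyx, hyy, smul_eq_mul, mul_one, mul_zero, zero_sub, zero_add]
      rw [hsymm w x, hsymm w y]
      module
    · rw [hJ', hJ']
      simp only [map_sub, map_smul, map_add, LinearMap.add_apply, LinearMap.sub_apply,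
        LinearMap.smul_apply, smul_eq_mul, hJs]
      rw [hsymm v x, hsymm v y]
      ring
    · rcases hxK with rfl | hxK
      · rw [Submodule.mem_bot] at hz ⊢
        rw [hz, map_zero]
      · have hxz : B x z = 0 := hK x hxK z hz
        have h1 := hproj z (hKW hz)
        rw [hsymm z x, hxz, zero_smul, sub_zero] at h1
        have h2 := hJK _ ⟨K.sub_mem hz (K.smul_mem _ hxK), h1⟩
        rw [map_sub, map_smul, hJx, smul_zero, sub_zero] at h2
        rw [hJ', hxz, zero_smul, sub_zero]
        exact K.add_mem h2.1 (K.smul_mem _ hxK)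

/-- An isometry without eigenvalue `-1` has determinant `1`, because
`⟨(1 + g) v, g w⟩ = ⟨v, (1 + g) w⟩`. -/
theorem det_eq_one_of_isometry [FiniteDimensional ℂ V] {B : V →ₗ[ℂ] V →ₗ[ℂ] ℂ}
    (hB : ∀ v, (∀ w, B v w = 0) → v = 0) (g : V →ₗ[ℂ] V) (hg : ∀ v w, B (g v) (g w) = B v w)
    (h1 : ∀ v, v + g v = 0 → v = 0) : LinearMap.det g = 1 := by
  have h := det_mul_det_of_adjoint hB (1 + g) g (1 + g) (by
    intro v w
    simp [hg, add_comm])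
  have hu : IsUnit (1 + g) := by
    rw [LinearMap.isUnit_iff_ker_eq_bot, LinearMap.ker_eq_bot']
    intro v hv
    exact h1 v hv
  have hd : LinearMap.det (1 + g) ≠ 0 := (hu.map LinearMap.det).ne_zero
  exact mul_left_cancel₀ hd (by rw [h, mul_one])

/-- The conditions defining the stabilizer of `K` in `SO(V)`, apart from bijectivity, which
follows from the isometry condition for a nondegenerate form. The inclusion `g K ⊆ K` is then
equivalent to `g K = K`. -/
def IsStab (B : V →ₗ[ℂ] V →ₗ[ℂ] ℂ) (K : Submodule ℂ V) (g : V →ₗ[ℂ] V) : Prop :=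
  (∀ v w, B (g v) (g w) = B v w) ∧ LinearMap.det g = 1 ∧ ∀ x ∈ K, g x ∈ K

theorem IsStab.mul {B : V →ₗ[ℂ] V →ₗ[ℂ] ℂ} {K : Submodule ℂ V} {g h : V →ₗ[ℂ] V}
    (hg : IsStab B K g) (hh : IsStab B K h) : IsStab B K (g * h) :=
  ⟨fun v w => by simp [hg.1, hh.1], by rw [map_mul, hg.2.1, hh.2.1, one_mul],
    fun x hx => hg.2.2 _ (hh.2.2 x hx)⟩

theorem isometry_injective {B : V →ₗ[ℂ] V →ₗ[ℂ] ℂ} (hB : ∀ v, (∀ w, B v w = 0) → v = 0)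
    {g : V →ₗ[ℂ] V} (hg : ∀ v w, B (g v) (g w) = B v w) {v : V} (hv : g v = 0) : v = 0 :=
  hB v fun w => by rw [← hg, hv]; simp

/-- Rotation by the angle `θ` generated by a skew-adjoint `J` with `J ^ 3 = J`: it acts by
`exp (± i θ)` on the `± 1`-eigenspaces of `J` and trivially on its kernel. -/
noncomputable def rot (J : V →ₗ[ℂ] V) (θ : ℂ) : V →ₗ[ℂ] V :=
  1 + (Complex.cos θ - 1) • (J * J) + (Complex.I * Complex.sin θ) • J

theorem isStab_rot [FiniteDimensional ℂ V] {B : V →ₗ[ℂ] V →ₗ[ℂ] ℂ}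
    (hB : ∀ v, (∀ w, B v w = 0) → v = 0) (K : Submodule ℂ V) (J : V →ₗ[ℂ] V)
    (hJ : ∀ v, J (J (J v)) = J v) (hJs : ∀ v w, B (J v) w = - B v (J w))
    (hJK : ∀ x ∈ K, J x ∈ K) (θ : ℂ) : IsStab B K (rot J θ) := by
  have hiso : ∀ t v w, B (rot J t v) (rot J t w) = B v w := by
    intro t v w
    have hcs := Complex.sin_sq_add_cos_sq t
    have hI : Complex.I ^ 2 = -1 := Complex.I_sq
    simp only [rot, LinearMap.add_apply, LinearMap.smul_apply, Module.End.one_apply,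
      Module.End.mul_apply, map_add, map_smul, smul_eq_mul, hJs, hJ]
    linear_combination (-B v (J (J w)) * (Complex.sin t) ^ 2) * hI + B v (J (J w)) * hcs
  refine ⟨hiso θ, ?_, fun x hx => ?_⟩
  · -- `rot J θ` is the square of the isometry `rot J (θ / 2)`, whose determinant is `± 1`.
    have hsq : rot J θ = rot J (θ / 2) * rot J (θ / 2) := by
      ext v
      have hc : Complex.cos θ = 2 * Complex.cos (θ / 2) ^ 2 - 1 := by
        rw [← Complex.cos_two_mul]; congr 1; ring
      have hs : Complex.sin θ = 2 * Complex.sin (θ / 2) * Complex.cos (θ / 2) := by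
        rw [← Complex.sin_two_mul]; congr 1; ring
      have hcs := Complex.sin_sq_add_cos_sq (θ / 2)
      have hI : Complex.I ^ 2 = -1 := Complex.I_sq
      simp only [rot, LinearMap.add_apply, LinearMap.smul_apply, Module.End.one_apply,
        Module.End.mul_apply, map_add, map_smul, hJ, hc, hs]
      match_scalars
      · ring
      · linear_combination (-(Complex.sin (θ / 2)) ^ 2) * hI + hcs
      · ring
    have h := det_mul_det_of_adjoint hB (rot J (θ / 2)) (rot J (θ / 2)) 1
      (fun v w => by rw [hiso]; rfl)
    rw [hsq, map_mul, h, map_one]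
  · simp only [rot, LinearMap.add_apply, LinearMap.smul_apply, Module.End.one_apply,
      Module.End.mul_apply]
    exact K.add_mem (K.add_mem hx (K.smul_mem _ (hJK _ (hJK _ hx)))) (K.smul_mem _ (hJK _ hx))

/-! ### Removing the eigenvalue `-1` -/

/-- A stabilizer element `g` becomes free of the eigenvalue `-1` after multiplication by a
rotation of angle `π` that stabilizes `K`. The rotation is `-1` on the generalized `-1`-eigenspace
`W` of `g` and trivial on the Fitting complement `W'`, which is orthogonal to `W`; it exists because
`det g = 1` makes `dim W` even. -/
theorem exists_rot_mul_no_neg_one [FiniteDimensional ℂ V] {B : V →ₗ[ℂ] V →ₗ[ℂ] ℂ}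
    (hB : ∀ v, (∀ w, B v w = 0) → v = 0) (hsymm : ∀ v w, B v w = B w v)
    (K : Submodule ℂ V) (hK : ∀ x ∈ K, ∀ y ∈ K, B x y = 0) (g : V →ₗ[ℂ] V)
    (hg : IsStab B K g) :
    ∃ J : V →ₗ[ℂ] V, (∀ v, J (J (J v)) = J v) ∧ (∀ v w, B (J v) w = - B v (J w)) ∧
      (∀ x ∈ K, J x ∈ K) ∧ ∀ v, v + (g * rot J Real.pi) v = 0 → v = 0 := by
  obtain ⟨hgi, hgd, hgK⟩ := hg
  obtain ⟨N, hN, hN1⟩ := (((g + 1).eventually_isCompl_ker_pow_range_pow).and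
    (Filter.eventually_ge_atTop 1)).exists
  set f : V →ₗ[ℂ] V := (g + 1) ^ N with hf
  set W := LinearMap.ker f with hW
  set W' := LinearMap.range f with hW'
  have hcomm : ∀ v, f (g v) = g (f v) := by
    have h : Commute f g := ((Commute.refl g).add_left (Commute.one_left g)).pow_left N
    exact fun v => LinearMap.congr_fun h.eq v
  have hgW : ∀ w ∈ W, g w ∈ W := by
    intro w hw
    rw [LinearMap.mem_ker] at hw ⊢
    rw [hcomm, hw, map_zero]
  have hgW' : ∀ w ∈ W', g w ∈ W' := by
    rintro _ ⟨x, rfl⟩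
    exact ⟨g x, hcomm x⟩
  have hdisj : ∀ w ∈ W, w ∈ W' → w = 0 := fun w h1 h2 =>
    (Submodule.mem_bot ℂ).mp (hN.inf_eq_bot ▸ (⟨h1, h2⟩ : w ∈ W ⊓ W'))
  have hdec : ∀ v, ∃ w ∈ W, ∃ w' ∈ W', w + w' = v := fun v =>
    Submodule.mem_sup.mp (hN.sup_eq_top ▸ Submodule.mem_top)
  -- The adjoint of `g + 1` is `g⁻¹ (g + 1)`, so `⟨(g + 1) x, g w⟩ = ⟨x, (g + 1) w⟩`; iterate.
  have hadj : ∀ (j : ℕ) (x w : V), B (((g + 1) ^ j) x) ((g ^ j) w) = B x (((g + 1) ^ j) w) := by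
    intro j
    induction j with
    | zero => intro x w; simp
    | succ j ih =>
      intro x w
      have hc : (g ^ j) (g w) = g ((g ^ j) w) :=
        LinearMap.congr_fun ((Commute.refl g).pow_left j).eq w
      have hc' : ((g + 1) ^ j) (g w) = g (((g + 1) ^ j) w) :=
        LinearMap.congr_fun
          (((Commute.refl g).add_left (Commute.one_left g)).pow_left j).eq w
      rw [pow_succ (g + 1) j, pow_succ g j]
      simp only [Module.End.mul_apply]
      rw [ih, hc']
      have hc'' : ((g + 1) ^ j) ((g + 1) w) = (g + 1) (((g + 1) ^ j) w) :=
        LinearMap.congr_fun ((Commute.refl (g + 1)).pow_left j).eq w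
      rw [hc'']
      simp only [LinearMap.add_apply, Module.End.one_apply, map_add, hgi]
      rw [add_comm]
  have hgNW : W.map (g ^ N) = W := by
    have h1 : W.map g = W := map_eq_of_injective g W hgW fun x _ => isometry_injective hB hgi
    clear_value f
    clear hN hf hadj hN1
    induction N with
    | zero => rw [pow_zero]; exact Submodule.map_id W
    | succ j ih =>
      rw [pow_succ, Module.End.mul_eq_comp, Submodule.map_comp, h1, ih]
  have horth : ∀ w ∈ W, ∀ w' ∈ W', B w w' = 0 := by
    rintro w hw _ ⟨x, rfl⟩
    rw [← hgNW] at hw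
    obtain ⟨u, hu, rfl⟩ := hw
    rw [hsymm, hf, hadj, ← hf, LinearMap.mem_ker.mp hu, map_zero]
  have horth' : ∀ w ∈ W, ∀ w' ∈ W', B w' w = 0 := fun w hw w' hw' => by
    rw [hsymm, horth w hw w' hw']
  have hnd : ∀ w ∈ W, (∀ w' ∈ W, B w w' = 0) → w = 0 := by
    intro w hw h
    refine hB w fun v => ?_
    obtain ⟨a, ha, b, hb, rfl⟩ := hdec v
    rw [map_add, h a ha, horth w hw b hb, add_zero]
  -- Flipping the sign of `g` on `W` removes the eigenvalue `-1`.
  have hflip : ∀ ε : V →ₗ[ℂ] V, (∀ w ∈ W, ε w = -w) → (∀ w ∈ W', ε w = w) →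
      ∀ v, v + (g * ε) v = 0 → v = 0 := by
    intro ε h1 h2 v hv
    obtain ⟨w, hw, w', hw', rfl⟩ := hdec v
    simp only [Module.End.mul_apply, map_add, h1 w hw, h2 w' hw', map_neg] at hv
    have e1 : w - g w = -(w' + g w') := by
      rw [eq_neg_iff_add_eq_zero, ← hv]; abel
    have z1 : w - g w = 0 := hdisj _ (W.sub_mem hw (hgW w hw))
      (e1 ▸ W'.neg_mem (W'.add_mem hw' (hgW' w' hw')))
    have z2 : w' + g w' = 0 := by rw [z1] at e1; exact neg_eq_zero.mp e1.symm
    have hw0 : w = 0 := by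
      have hgw : g w = w := (sub_eq_zero.mp z1).symm
      have hp : ∀ j : ℕ, ((g + 1) ^ j) w = (2 : ℂ) ^ j • w := by
        intro j
        induction j with
        | zero => simp
        | succ j ih =>
          rw [pow_succ', Module.End.mul_apply, ih, map_smul, LinearMap.add_apply,
            Module.End.one_apply, hgw, pow_succ]
          module
      have h0 : f w = 0 := hw
      rw [hf, hp] at h0
      exact (smul_eq_zero.mp h0).resolve_left (pow_ne_zero _ two_ne_zero)
    have hw'0 : w' = 0 := by
      refine hdisj _ ?_ hw'
      obtain ⟨j, rfl⟩ := Nat.exists_eq_add_of_le' hN1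
      rw [LinearMap.mem_ker, hf, pow_succ, Module.End.mul_apply, LinearMap.add_apply,
        Module.End.one_apply, add_comm (g w'), z2, map_zero]
    rw [hw0, hw'0, add_zero]
  have heven : Even (finrank ℂ W) := by
    let e := Submodule.prodEquivOfIsCompl W W' hN
    let p : (W × W') →ₗ[ℂ] (W × W') :=
      LinearMap.prodMap ((-1 : ℂ) • LinearMap.id) LinearMap.id
    let ε : V →ₗ[ℂ] V := (e : (W × W') →ₗ[ℂ] V) ∘ₗ p ∘ₗ (e.symm : V →ₗ[ℂ] (W × W'))
    have hε1 : ∀ w ∈ W, ε w = -w := by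
      intro w hw
      have h : e.symm w = (⟨w, hw⟩, 0) :=
        Submodule.prodEquivOfIsCompl_symm_apply_left W W' hN ⟨w, hw⟩
      change e (p (e.symm w)) = _
      rw [h]
      simp [p, e]
    have hε2 : ∀ w ∈ W', ε w = w := by
      intro w hw
      have h : e.symm w = (0, ⟨w, hw⟩) :=
        Submodule.prodEquivOfIsCompl_symm_apply_right W W' hN ⟨w, hw⟩
      change e (p (e.symm w)) = _
      rw [h]
      simp [p, e]
    have hdet : LinearMap.det ε = (-1) ^ finrank ℂ W := by
      simp only [ε, p]
      rw [LinearMap.det_conj, LinearMap.det_prodMap, LinearMap.det_smul, LinearMap.det_id,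
        LinearMap.det_id, mul_one, mul_one]
    have hεi : ∀ v w, B (ε v) (ε w) = B v w := by
      intro v u
      obtain ⟨a, ha, b, hb, rfl⟩ := hdec v
      obtain ⟨a', ha', b', hb', rfl⟩ := hdec u
      simp [hε1 a ha, hε1 a' ha', hε2 b hb, hε2 b' hb', horth a ha b' hb', horth' a' ha' b hb]
    have h1 := det_eq_one_of_isometry hB (g * ε) (fun v w => by simp [hgi, hεi])
      (hflip ε hε1 hε2)
    rw [map_mul, hgd, one_mul, hdet] at h1
    exact (neg_one_pow_eq_one_iff_even (by norm_num)).mp h1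
  obtain ⟨m, hm⟩ := heven
  obtain ⟨J, hJW, hJJ, hJs, hJK⟩ := exists_skew_involution hB hsymm m W (K ⊓ W)
    (by rw [hm, two_mul]) hnd inf_le_right (fun a ha b hb => hK a ha.1 b hb.1)
  have hJ0 : ∀ w ∈ W', J w = 0 := fun w hw => hB _ fun v => by
    rw [hJs, horth' _ (hJW v) w hw, neg_zero]
  refine ⟨J, fun v => hJJ _ (hJW v), hJs, fun x hx => ?_, hflip _ (fun w hw => ?_) fun w hw => ?_⟩
  · -- The components of `x ∈ K` in `W` and `W'` lie in `K`, as `f` is invertible on `f K ⊆ K`.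
    have hfK : ∀ x ∈ K, f x ∈ K := by
      have hp : ∀ (j : ℕ), ∀ x ∈ K, ((g + 1) ^ j) x ∈ K := by
        intro j
        induction j with
        | zero => intro x hx; simpa using hx
        | succ j ih =>
          intro x hx
          rw [pow_succ, Module.End.mul_apply]
          exact ih _ (K.add_mem (hgK x hx) hx)
      exact hp N
    have hff : (K.map f).map f = K.map f := by
      refine map_eq_of_injective f _ ?_ ?_
      · rintro _ ⟨y, hy, rfl⟩
        exact ⟨f y, hfK y hy, rfl⟩
      · rintro _ ⟨y, hy, rfl⟩ h0
        exact hdisj _ h0 ⟨y, rfl⟩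
    have hx1 : f x ∈ (K.map f).map f := by
      rw [hff]
      exact ⟨x, hx, rfl⟩
    obtain ⟨_, ⟨y, hy, rfl⟩, hxy⟩ := hx1
    have hxW : x - f y ∈ W := by
      rw [LinearMap.mem_ker, map_sub, hxy, sub_self]
    have h := hJK (x - f y) ⟨K.sub_mem hx (hfK y hy), hxW⟩
    rw [map_sub, hJ0 (f y) ⟨y, rfl⟩, sub_zero] at h
    exact h.1
  · simp only [rot, Complex.cos_pi, Complex.sin_pi, mul_zero, zero_smul, add_zero,
      LinearMap.add_apply, LinearMap.smul_apply, Module.End.one_apply, Module.End.mul_apply,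
      hJJ w hw]
    module
  · simp [rot, hJ0 w hw]

end Algebra

/-! ### Connectedness -/

section Topology

variable {V : Type*} [NormedAddCommGroup V] [NormedSpace ℂ V] [FiniteDimensional ℂ V]

/-- The Cayley path: with `A z = (1 + z) + (1 - z) g`, the map `c z = A (-z) (A z)⁻¹` lies in the
stabilizer whenever `A z` is invertible, that is, for `z` outside a finite subset of `ℂ`, and it takes
the values `c 0 = 1` and `c 1 = g`. -/
theorem exists_preconnected_of_no_neg_one {B : V →ₗ[ℂ] V →ₗ[ℂ] ℂ}
    (hB : ∀ v, (∀ w, B v w = 0) → v = 0) (K : Submodule ℂ V) (g : V →L[ℂ] V)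
    (hg : IsStab B K (g : V →ₗ[ℂ] V)) (h1 : ∀ v, v + g v = 0 → v = 0) :
    ∃ t ⊆ {g : V →L[ℂ] V | IsStab B K (g : V →ₗ[ℂ] V)},
      (1 : V →L[ℂ] V) ∈ t ∧ g ∈ t ∧ IsPreconnected t := by
  have : CompleteSpace V := FiniteDimensional.complete ℂ V
  obtain ⟨hgi, hgd, hgK⟩ := hg
  simp only [ContinuousLinearMap.coe_coe] at hgi hgK
  let A : ℂ → V →L[ℂ] V := fun z => (1 + z) • (1 : V →L[ℂ] V) + (1 - z) • g
  have hA : ∀ z v, A z v = (1 + z) • v + (1 - z) • g v := fun z v => by simp [A]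
  let c : ℂ → V →L[ℂ] V := fun z => A (-z) * Ring.inverse (A z)
  let Z : Set ℂ := {z | ∃ v, v ≠ 0 ∧ A z v = 0}
  -- `A z v = 0` makes `v` an eigenvector of `g`, whose eigenvalue determines `z`.
  have hZ : Z.Finite := by
    refine ((Module.End.finite_hasEigenvalue (g : V →ₗ[ℂ] V)).image
      (fun μ : ℂ => (μ + 1) / (μ - 1))).subset ?_
    rintro z ⟨v, hv0, hv⟩
    rw [hA] at hv
    have hz : 1 - z ≠ 0 := by
      intro h
      have hz1 : z = 1 := (sub_eq_zero.mp h).symm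
      rw [hz1, sub_self, zero_smul, add_zero, smul_eq_zero] at hv
      rcases hv with hv | hv
      · norm_num at hv
      · exact hv0 hv
    have hgv : g v = (-(1 + z) / (1 - z)) • v := by
      have h2 : (1 - z) • g v = -((1 + z) • v) := by
        rw [eq_neg_iff_add_eq_zero, add_comm]; exact hv
      rw [div_eq_inv_mul, mul_smul, neg_smul, ← h2, smul_smul, inv_mul_cancel₀ hz, one_smul]
    refine ⟨-(1 + z) / (1 - z), ?_, ?_⟩
    · exact Module.End.hasEigenvalue_of_hasEigenvector
        (Module.End.hasEigenvector_iff.mpr ⟨Module.End.mem_eigenspace_iff.mpr hgv, hv0⟩)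
    · have e1 : -(1 + z) / (1 - z) + 1 = -2 * z / (1 - z) := by field_simp; ring
      have e2 : -(1 + z) / (1 - z) - 1 = -2 / (1 - z) := by field_simp; ring
      simp only [e1, e2]
      field_simp
  have hconn : IsPreconnected Zᶜ :=
    (hZ.countable.isPathConnected_compl_of_one_lt_rank
      (by rw [Complex.rank_real_complex]; norm_num)).isConnected.isPreconnected
  have hinj : ∀ z ∈ Zᶜ, ∀ v, A z v = 0 → v = 0 := by
    intro z hz v hv
    by_contra h
    exact hz ⟨v, h, hv⟩
  have hunit : ∀ z ∈ Zᶜ, IsUnit (A z) := by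
    intro z hz
    rw [ContinuousLinearMap.isUnit_iff_bijective]
    have hi : Function.Injective (A z : V →ₗ[ℂ] V) := by
      rw [← LinearMap.ker_eq_bot, LinearMap.ker_eq_bot']
      exact hinj z hz
    exact ⟨hi, LinearMap.surjective_of_injective hi⟩
  have hAc : Continuous A := by fun_prop
  have hcont : ContinuousOn c Zᶜ := by
    intro z hz
    apply ContinuousAt.continuousWithinAt
    obtain ⟨u, hu⟩ := hunit z hz
    have hinv : ContinuousAt Ring.inverse (A z) := hu ▸ NormedRing.inverse_continuousAt u
    exact (hAc.comp continuous_neg).continuousAt.mul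
      (ContinuousAt.comp (f := A) hinv hAc.continuousAt)
  -- `c z` is characterised by `c z (A z v) = A (-z) v`.
  have hcA : ∀ z ∈ Zᶜ, c z * A z = A (-z) := by
    intro z hz
    simp only [c]
    rw [mul_assoc, Ring.inverse_mul_cancel _ (hunit z hz), mul_one]
  have hsurj : ∀ z ∈ Zᶜ, ∀ v, ∃ u, A z u = v := fun z hz =>
    ((ContinuousLinearMap.isUnit_iff_bijective).mp (hunit z hz)).2
  have hstab : ∀ z ∈ Zᶜ, IsStab B K (c z : V →ₗ[ℂ] V) := by
    intro z hz
    have hap : ∀ u, c z (A z u) = A (-z) u := fun u =>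
      congrArg (fun T : V →L[ℂ] V => T u) (hcA z hz)
    refine ⟨fun v w => ?_, ?_, fun x hx => ?_⟩
    · obtain ⟨v, rfl⟩ := hsurj z hz v
      obtain ⟨w, rfl⟩ := hsurj z hz w
      simp only [ContinuousLinearMap.coe_coe, hap]
      simp only [hA, map_add, map_smul, LinearMap.add_apply, LinearMap.smul_apply, smul_eq_mul, hgi]
      ring
    · have hd := det_mul_det_of_adjoint hB (A z : V →ₗ[ℂ] V) (g : V →ₗ[ℂ] V)
        (A (-z) : V →ₗ[ℂ] V) (fun v w => by
          simp only [ContinuousLinearMap.coe_coe, hA, map_add, map_smul, LinearMap.add_apply,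
            LinearMap.smul_apply, smul_eq_mul, hgi]
          ring)
      have hm : (c z : V →ₗ[ℂ] V) * (A z : V →ₗ[ℂ] V) = (A (-z) : V →ₗ[ℂ] V) :=
        congrArg (fun T : V →L[ℂ] V => (T : V →ₗ[ℂ] V)) (hcA z hz)
      have hdm := congrArg LinearMap.det hm
      rw [map_mul, ← hd, hgd, mul_one] at hdm
      have hA0 : LinearMap.det (A z : V →ₗ[ℂ] V) ≠ 0 := by
        have hu : IsUnit (A z : V →ₗ[ℂ] V) := by
          rw [LinearMap.isUnit_iff_ker_eq_bot, LinearMap.ker_eq_bot']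
          exact hinj z hz
        exact (hu.map LinearMap.det).ne_zero
      exact mul_right_cancel₀ hA0 (by rw [hdm, one_mul])
    · have hAK : ∀ z, ∀ y ∈ K, A z y ∈ K := fun z y hy => by
        rw [hA]
        exact K.add_mem (K.smul_mem _ hy) (K.smul_mem _ (hgK y hy))
      have hmap := map_eq_of_injective (A z : V →ₗ[ℂ] V) K (hAK z) fun y _ => hinj z hz y
      rw [← hmap] at hx
      obtain ⟨y, hy, rfl⟩ := hx
      simp only [ContinuousLinearMap.coe_coe, hap]
      exact hAK _ y hy
  have h0Z : (0 : ℂ) ∈ Zᶜ := by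
    rintro ⟨v, hv0, hv⟩
    rw [hA] at hv
    exact hv0 (h1 v (by simpa using hv))
  have h1Z : (1 : ℂ) ∈ Zᶜ := by
    rintro ⟨v, hv0, hv⟩
    rw [hA, sub_self, zero_smul, add_zero, smul_eq_zero] at hv
    rcases hv with hv | hv
    · norm_num at hv
    · exact hv0 hv
  refine ⟨c '' Zᶜ, ?_, ⟨0, h0Z, ?_⟩, ⟨1, h1Z, ?_⟩, hconn.image c hcont⟩
  · rintro _ ⟨z, hz, rfl⟩
    exact hstab z hz
  · refine (hunit 0 h0Z).mul_right_cancel ?_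
    rw [hcA 0 h0Z, neg_zero, one_mul]
  · refine (hunit 1 h1Z).mul_right_cancel ?_
    rw [hcA 1 h1Z]
    ext v
    simp only [mul_apply_eq_comp, hA, map_add, map_smul]
    module

/-- The rotation path leads from `g` to an element without eigenvalue `-1`, and the Cayley path from
there to `1`. -/
theorem isConnected_stab {B : V →ₗ[ℂ] V →ₗ[ℂ] ℂ}
    (hB : ∀ v, (∀ w, B v w = 0) → v = 0) (hsymm : ∀ v w, B v w = B w v)
    (K : Submodule ℂ V) (hK : ∀ x ∈ K, ∀ y ∈ K, B x y = 0) :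
    IsConnected {g : V →L[ℂ] V | IsStab B K (g : V →ₗ[ℂ] V)} := by
  have hone : (1 : V →L[ℂ] V) ∈ {g : V →L[ℂ] V | IsStab B K (g : V →ₗ[ℂ] V)} :=
    ⟨fun v w => rfl, LinearMap.det_id, fun x hx => hx⟩
  refine ⟨⟨1, hone⟩, isPreconnected_of_forall 1 fun g hg => ?_⟩
  obtain ⟨J, hJ, hJs, hJK, hJg⟩ := exists_rot_mul_no_neg_one hB hsymm K hK g hg
  let Jc : V →L[ℂ] V := LinearMap.toContinuousLinearMap J
  let ρ : ℝ → V →L[ℂ] V := fun θ =>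
    g * (1 + (Complex.cos θ - 1) • (Jc * Jc) + (Complex.I * Complex.sin θ) • Jc)
  have hρ : ∀ θ : ℝ, (ρ θ : V →ₗ[ℂ] V) = (g : V →ₗ[ℂ] V) * rot J θ := fun θ => rfl
  have hρs : ∀ θ : ℝ, IsStab B K (ρ θ : V →ₗ[ℂ] V) := fun θ => by
    rw [hρ]
    exact hg.mul (isStab_rot hB K J hJ hJs hJK θ)
  have hρc : Continuous ρ := by fun_prop
  obtain ⟨t, ht, h1t, hgt, htc⟩ := exists_preconnected_of_no_neg_one hB K (ρ Real.pi)
    (hρs Real.pi) (fun v hv => hJg v hv)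
  refine ⟨t ∪ Set.range ρ, Set.union_subset ht ?_, Or.inl h1t, Or.inr ⟨0, ?_⟩,
    htc.union (ρ Real.pi) hgt ⟨Real.pi, rfl⟩ (isPreconnected_range hρc)⟩
  · rintro _ ⟨θ, rfl⟩
    exact hρs θ
  · simp [ρ]

theorem setOf_stab_eq {B : V →ₗ[ℂ] V →ₗ[ℂ] ℂ} (hB : ∀ v, (∀ w, B v w = 0) → v = 0)
    (K : Submodule ℂ V) :
    {g : V →L[ℂ] V |
      Function.Bijective g ∧ (∀ v w, B (g v) (g w) = B v w) ∧
      LinearMap.det (g : V →ₗ[ℂ] V) = 1 ∧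
      Submodule.map (g : V →ₗ[ℂ] V) K = K} =
    {g : V →L[ℂ] V | IsStab B K (g : V →ₗ[ℂ] V)} := by
  ext g
  constructor
  · rintro ⟨-, h1, h2, h3⟩
    exact ⟨h1, h2, fun x hx => h3 ▸ Submodule.mem_map_of_mem hx⟩
  · intro h
    have hi : ∀ v, g v = 0 → v = 0 := fun v hv => isometry_injective hB h.1 hv
    have hinj : Function.Injective (g : V →ₗ[ℂ] V) := by
      rw [← LinearMap.ker_eq_bot, LinearMap.ker_eq_bot']
      exact hi
    exact ⟨⟨hinj, LinearMap.surjective_of_injective hinj⟩, h.1, h.2.1,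
      map_eq_of_injective _ K h.2.2 fun x _ => hi x⟩

theorem IsStab.bperp {B : V →ₗ[ℂ] V →ₗ[ℂ] ℂ} (hB : ∀ v, (∀ w, B v w = 0) → v = 0)
    {K : Submodule ℂ V} {g : V →ₗ[ℂ] V} (h : IsStab B K g) : IsStab B (bperp B K) g := by
  refine ⟨h.1, h.2.1, fun x hx w hw => ?_⟩
  rw [← map_eq_of_injective g K h.2.2 fun x _ => isometry_injective hB h.1] at hw
  obtain ⟨u, hu, rfl⟩ := hw
  rw [h.1]
  exact hx u hu

end Topology

/-- Proposition 3.9(3) (`prop:orbit-orth`), connected case: for a nondegenerate symmetric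
form, if `dim H = k`, `dim (H ∩ H^⊥) = k - r` and `r = max {0, 2k - n}`, then the stabilizer
of `H` in `SO(V)` is a connected subset of the endomorphism space.  (The canonical topology
of the finite-dimensional space `End V` is realized via an arbitrary norm on `V`.) -/
theorem stmt_8 {V : Type*} [NormedAddCommGroup V] [NormedSpace ℂ V] [FiniteDimensional ℂ V]
    (n : ℕ) (hn : finrank ℂ V = n)
    (B : V →ₗ[ℂ] V →ₗ[ℂ] ℂ)
    (hB : ∀ v, (∀ w, B v w = 0) → v = 0)
    (hsymm : ∀ v w, B v w = B w v)
    (H : Submodule ℂ V) (k r : ℕ) (hk : finrank ℂ H = k)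
    (hrad : (finrank ℂ ↥(H ⊓ bperp B H) : ℤ) = (k : ℤ) - r)
    (hr : (r : ℤ) = max 0 (2 * (k : ℤ) - n)) :
    IsConnected {g : V →L[ℂ] V |
      Function.Bijective g ∧ (∀ v w, B (g v) (g w) = B v w) ∧
      LinearMap.det (g : V →ₗ[ℂ] V) = 1 ∧
      Submodule.map (g : V →ₗ[ℂ] V) H = H} := by
  rw [setOf_stab_eq hB]
  have hperp : ∀ L : Submodule ℂ V, bperp B L = LinearMap.BilinForm.orthogonal B L := by
    intro L
    ext v
    exact forall₂_congr fun w _ => by rw [hsymm]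
  have hrefl : LinearMap.BilinForm.IsRefl B := fun v w h => by rw [hsymm, h]
  have hnd : LinearMap.BilinForm.Nondegenerate B :=
    ⟨hB, fun v h => hB v fun w => by rw [hsymm, h]⟩
  have hpp : bperp B (bperp B H) = H := by
    rw [hperp, hperp, LinearMap.BilinForm.orthogonal_orthogonal hnd hrefl]
  have hfin : finrank ℂ (bperp B H) = n - k := by
    rw [hperp, LinearMap.BilinForm.finrank_orthogonal hnd, hn, hk]
  have hkn : k ≤ n := by rw [← hk, ← hn]; exact Submodule.finrank_le H
  rcases le_total (2 * k) n with h | h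
  · -- here `r = 0`, so `H` is totally isotropic
    have hH : H ⊓ bperp B H = H :=
      Submodule.eq_of_le_of_finrank_eq inf_le_left (by omega)
    exact isConnected_stab hB hsymm H fun x hx y hy => (inf_eq_left.mp hH) hx y hy
  · -- here `H^⊥ ⊆ H = H^⊥⊥`, so `H^⊥` is totally isotropic; it has the same stabilizer as `H`
    have hH : H ⊓ bperp B H = bperp B H :=
      Submodule.eq_of_le_of_finrank_eq inf_le_right (by omega)
    have hset : {g : V →L[ℂ] V | IsStab B H (g : V →ₗ[ℂ] V)} =
        {g : V →L[ℂ] V | IsStab B (bperp B H) (g : V →ₗ[ℂ] V)} := by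
      ext g
      refine ⟨fun hg => hg.bperp hB, fun hg => ?_⟩
      have := hg.bperp hB
      rwa [hpp] at this
    rw [hset]
    exact isConnected_stab hB hsymm _ fun x hx y hy => hx y ((inf_eq_right.mp hH) hy)
end

section
/- Let H ⊆ V be a subspace and set R = H ∩ H^⊥. Every isometry g of V with g(H) = H also satisfies g(H^⊥) = H^⊥ and g(R) = R, and hence induces linear automorphisms of R, of H/R, and of H^⊥/R; the induced automorphisms of H/R and H^⊥/R are isometries for the induced nondegenerate forms. The resulting map is surjective: for every linear automorphism a of R, every isometry e of H/R, and every isometry f of H^⊥/R, there exists an isometry g of V with g(H) = H inducing a on R, e on H/R, and f on H^⊥/R. -/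
/-!
The first half is formal: `g` carries `H^⊥` into itself because `g` is onto `H`, hence `R` too, and
the quotient maps are isometries because `R` is orthogonal to both `H` and `H^⊥`.

For surjectivity, a section of `H → H/R` gives an endomorphism of `H` that restricts to `a` on `R`
and lifts `e` (`exists_lift`), and likewise for `H^⊥` and `f`. The two agree on
`R = H ∩ H^⊥`, so they glue to an injective isometric map `h` on `W = H + H^⊥`. This `W` is
coisotropic, `W^⊥ ⊆ H^⊥ ⊆ W`, and for coisotropic subspaces Witt's extension theorem has a short
proof (`exists_isometry_extending`). Nondegeneracy yields an automorphism `g₁` of `V` extending `h`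
with `⟨g₁ x, h y⟩ = ⟨x, y⟩` for `x ∈ V`, `y ∈ W`; its defect
`D x y = ⟨g₁ x, g₁ y⟩ - ⟨x, y⟩` vanishes as soon as one argument is in `W`. The map `c` determined
by `⟨c x, g₁ y⟩ = -D x y / 2` kills `W` and takes values in the totally isotropic `(h W)^⊥`, so
`g₁ + c` is an isometry that still extends `h`.
-/

open Module

/-- A nondegenerate form on a finite-dimensional space represents every bilinear form. -/
lemma exists_represent {V : Type*} [AddCommGroup V] [Module ℂ V] [FiniteDimensional ℂ V]
    (B : V →ₗ[ℂ] V →ₗ[ℂ] ℂ) (hB : ∀ v, (∀ w, B v w = 0) → v = 0)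
    (T : V →ₗ[ℂ] V →ₗ[ℂ] ℂ) : ∃ c : V →ₗ[ℂ] V, ∀ x y, B (c x) y = T x y := by
  have hinj : Function.Injective B := by
    rw [injective_iff_map_eq_zero]
    intro v hv
    exact hB v fun w => by rw [hv]; rfl
  let e : V ≃ₗ[ℂ] (V →ₗ[ℂ] ℂ) :=
    LinearMap.linearEquivOfInjective B hinj Subspace.dual_finrank_eq.symm
  refine ⟨e.symm.toLinearMap ∘ₗ T, fun x y => ?_⟩
  have : B (e.symm (T x)) = T x := e.apply_symm_apply (T x)
  simp [this]

/-- Witt extension from a coisotropic subspace `W`, i.e. one with `W^⊥ ⊆ W`. The factor `ε` treats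
the symmetric and skew-symmetric cases together. -/
lemma exists_isometry_extending {V : Type*} [AddCommGroup V] [Module ℂ V]
    [FiniteDimensional ℂ V] (B : V →ₗ[ℂ] V →ₗ[ℂ] ℂ) (hB : ∀ v, (∀ w, B v w = 0) → v = 0)
    (ε : ℂ) (hsymm : ∀ v w, B v w = ε * B w v)
    (W : Submodule ℂ V) (hW : bperp B W ≤ W) (h : W →ₗ[ℂ] V) (hinj : Function.Injective h)
    (hiso : ∀ x y : W, B (h x) (h y) = B x y) :
    ∃ g : V ≃ₗ[ℂ] V, (∀ v w, B (g v) (g w) = B v w) ∧ ∀ x : W, g x = h x := by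
  obtain ⟨s, hs⟩ := h.exists_leftInverse_of_injective (LinearMap.ker_eq_bot.2 hinj)
  obtain ⟨p, hp⟩ := W.subtype.exists_leftInverse_of_injective (by simp)
  replace hs : ∀ y, s (h y) = y := fun y => LinearMap.congr_fun hs y
  replace hp : ∀ y : W, p y = y := fun y => LinearMap.congr_fun hp y
  obtain ⟨k, hk⟩ := exists_represent B hB (B.compl₂ (W.subtype ∘ₗ s))
  simp only [LinearMap.compl₂_apply, LinearMap.comp_apply, Submodule.subtype_apply] at hk
  obtain ⟨g₁, hg₁⟩ : ∃ g₁ : V →ₗ[ℂ] V, ∀ x, g₁ x = h (p x) + k (x - p x) :=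
    ⟨h ∘ₗ p + k ∘ₗ (LinearMap.id - W.subtype ∘ₗ p), fun x => by simp⟩
  have hgW : ∀ x : W, g₁ x = h x := fun x => by rw [hg₁, hp]; simp
  have hgB : ∀ (x : V) (y : W), B (g₁ x) (h y) = B x y := by
    intro x y
    rw [hg₁, map_add, LinearMap.add_apply, hiso, hk, hs, ← LinearMap.add_apply, ← map_add]
    simp
  have hginj : Function.Injective g₁ := by
    rw [injective_iff_map_eq_zero]
    intro x hx
    have hxW : x ∈ W := hW fun w hw => by rw [← hgB x ⟨w, hw⟩, hx]; simp
    have h0 : h ⟨x, hxW⟩ = 0 := by rw [← hgW, hx]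
    simpa using (injective_iff_map_eq_zero h).1 hinj _ h0
  let G : V ≃ₗ[ℂ] V := LinearEquiv.ofInjectiveEndo g₁ hginj
  have hG : ∀ x, G x = g₁ x := fun x => rfl
  let D : V →ₗ[ℂ] V →ₗ[ℂ] ℂ := B.compl₁₂ g₁ g₁ - B
  have hD : ∀ x y, D x y = B (g₁ x) (g₁ y) - B x y := fun x y => by simp [D]
  have hDW : ∀ (x : V) (y : W), D x y = 0 := fun x y => by rw [hD, hgW, hgB, sub_self]
  have hDs : ∀ x y, D x y = ε * D y x := fun x y => by
    rw [hD, hD, hsymm x y, hsymm (g₁ x)]; ring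
  obtain ⟨c, hc'⟩ := exists_represent B hB ((-(1 / 2 : ℂ)) • D.compl₂ G.symm.toLinearMap)
  have hc : ∀ x y, B (c x) (g₁ y) = -(1 / 2) * D x y := by
    intro x y
    rw [hc', ← hG]
    simp
  have hcW : ∀ x : W, c x = 0 := by
    intro x
    refine hB _ fun w => ?_
    obtain ⟨y, rfl⟩ := G.surjective w
    rw [hG, hc, hDs, hDW]; simp
  have hcperp : ∀ (x : V) (y : W), B (c x) (h y) = 0 := fun x y => by
    rw [← hgW, hc, hDW, mul_zero]
  have hcc : ∀ x y, B (c x) (c y) = 0 := by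
    intro x y
    -- `c y ∈ (h W)^⊥ = g₁ (W^⊥) ⊆ h W`, which is orthogonal to `c x`.
    obtain ⟨z, hz⟩ := G.surjective (c y)
    rw [hG] at hz
    have hzW : z ∈ W := hW fun w hw => by
      rw [← hgB z ⟨w, hw⟩, hz, hcperp]
    rw [← hz, show g₁ z = h ⟨z, hzW⟩ from hgW ⟨z, hzW⟩, hcperp]
  have hfin : ∀ v w, B ((g₁ + c) v) ((g₁ + c) w) = B v w := by
    intro v w
    have h1 : B (g₁ v) (c w) = -(1 / 2) * D v w := by
      rw [hsymm, hc, hDs v w]; ring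
    simp only [LinearMap.add_apply, map_add]
    rw [h1, hc, hcc, hD]; ring
  have hfinj : Function.Injective (g₁ + c) := by
    rw [injective_iff_map_eq_zero]
    intro x hx
    exact hB x fun w => by rw [← hfin, hx]; simp
  refine ⟨LinearEquiv.ofInjectiveEndo (g₁ + c) hfinj, hfin, fun x => ?_⟩
  change (g₁ + c) (x : V) = h x
  rw [LinearMap.add_apply, hgW, hcW, add_zero]

/-- An automorphism `a` of `R ⊆ S` and an automorphism `e` of `S/R` come from a single
endomorphism of `S`. -/
lemma exists_lift {V : Type*} [AddCommGroup V] [Module ℂ V] (S R : Submodule ℂ V) (hRS : R ≤ S)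
    (RS : Submodule ℂ S) (hRS' : RS = R.comap S.subtype) (a : R ≃ₗ[ℂ] R)
    (e : (S ⧸ RS) ≃ₗ[ℂ] (S ⧸ RS)) :
    ∃ k : S →ₗ[ℂ] S, (∀ x, (Submodule.Quotient.mk (k x) : S ⧸ RS) = e (Submodule.Quotient.mk x)) ∧
      ∀ (x : S) (hx : (x : V) ∈ R), (k x : V) = a ⟨x, hx⟩ := by
  obtain ⟨σ, hσ⟩ := RS.mkQ.exists_rightInverse_of_surjective (by simp)
  replace hσ : ∀ q, (Submodule.Quotient.mk (σ q) : S ⧸ RS) = q :=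
    fun q => LinearMap.congr_fun hσ q
  let d : S →ₗ[ℂ] S := LinearMap.id - σ ∘ₗ RS.mkQ
  have hd : ∀ x, d x = x - σ (Submodule.Quotient.mk x) := fun x => rfl
  have hdR : ∀ x, S.subtype (d x) ∈ R := by
    intro x
    have : d x ∈ RS := by
      rw [← Submodule.Quotient.mk_eq_zero, hd, Submodule.Quotient.mk_sub, hσ, sub_self]
    rwa [hRS'] at this
  let r : S →ₗ[ℂ] R := LinearMap.codRestrict R (S.subtype ∘ₗ d) hdR
  refine ⟨Submodule.inclusion hRS ∘ₗ a.toLinearMap ∘ₗ r + σ ∘ₗ e.toLinearMap ∘ₗ RS.mkQ,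
    fun x => ?_, fun x hx => ?_⟩
  · have h0 : (Submodule.Quotient.mk (Submodule.inclusion hRS (a (r x))) : S ⧸ RS) = 0 := by
      rw [Submodule.Quotient.mk_eq_zero, hRS']
      exact (a (r x)).2
    simp [Submodule.Quotient.mk_add, h0, hσ]
  · have h0 : (Submodule.Quotient.mk x : S ⧸ RS) = 0 := by
      rw [Submodule.Quotient.mk_eq_zero, hRS']
      exact hx
    have hr : r x = ⟨x, hx⟩ := by
      ext
      change ((d x : S) : V) = x
      rw [hd, h0]; simp
    simp [h0, hr]

/-- An isometry of `V` preserving `S` and a subspace `R ⊆ S` orthogonal to `S` induces an isometry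
of `S/R`. -/
lemma exists_quotient_isometry {V : Type*} [AddCommGroup V] [Module ℂ V]
    (B : V →ₗ[ℂ] V →ₗ[ℂ] ℂ) (S R : Submodule ℂ V)
    (RS : Submodule ℂ S) (hRS' : RS = R.comap S.subtype)
    (hl : ∀ r ∈ R, ∀ s ∈ S, B r s = 0) (hr : ∀ r ∈ R, ∀ s ∈ S, B s r = 0)
    (g : V ≃ₗ[ℂ] V) (hg : ∀ v w, B (g v) (g w) = B v w)
    (hS : S.map (g : V →ₗ[ℂ] V) = S) (hR : R.map (g : V →ₗ[ℂ] V) = R) :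
    ∃ e : (S ⧸ RS) ≃ₗ[ℂ] (S ⧸ RS),
      (∀ v w : S, (w : V) = g (v : V) →
        e (Submodule.Quotient.mk v) = Submodule.Quotient.mk w) ∧
      (∀ v w v' w' : S,
        e (Submodule.Quotient.mk v) = Submodule.Quotient.mk v' →
        e (Submodule.Quotient.mk w) = Submodule.Quotient.mk w' →
        B (v' : V) (w' : V) = B (v : V) (w : V)) := by
  let gS : S ≃ₗ[ℂ] S := g.ofSubmodules S S hS
  have hgS : ∀ x, (gS x : V) = g x := fun x => rfl
  have hmap : RS.map (gS : S →ₗ[ℂ] S) = RS := by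
    ext y
    rw [Submodule.mem_map, hRS']
    constructor
    · rintro ⟨x, hx, rfl⟩
      change g (x : V) ∈ R
      rw [← hR]
      exact ⟨x, hx, rfl⟩
    · intro hy
      have hy' : (y : V) ∈ R := hy
      rw [← hR] at hy'
      obtain ⟨x, hx, hxy⟩ := hy'
      obtain ⟨z, rfl⟩ := gS.surjective y
      refine ⟨z, ?_, rfl⟩
      have : x = z := g.injective hxy
      change (z : V) ∈ R
      rwa [← this]
  have hmk : ∀ v w : S, Submodule.Quotient.equiv RS RS gS hmap (Submodule.Quotient.mk v) =
      Submodule.Quotient.mk w ↔ g (v : V) - w ∈ R := by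
    intro v w
    change (Submodule.Quotient.mk (gS v) : S ⧸ RS) = _ ↔ _
    rw [Submodule.Quotient.eq, hRS']
    rfl
  refine ⟨Submodule.Quotient.equiv RS RS gS hmap, fun v w hvw => ?_, fun v w v' w' hv hw => ?_⟩
  · rw [hmk, hvw, sub_self]
    exact R.zero_mem
  · rw [hmk] at hv hw
    have h1 := hl _ hv _ w'.2
    have h2 := hr _ hw _ (gS v).2
    rw [map_sub, LinearMap.sub_apply, sub_eq_zero] at h1
    rw [map_sub, sub_eq_zero, hgS, hg] at h2
    rw [← h1, ← h2]

lemma map_eq_of_forall_mem {V : Type*} [AddCommGroup V] [Module ℂ V] [FiniteDimensional ℂ V]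
    (g : V ≃ₗ[ℂ] V) (S : Submodule ℂ V) (h : ∀ x ∈ S, g x ∈ S) :
    S.map (g : V →ₗ[ℂ] V) = S := by
  refine Submodule.eq_of_le_of_finrank_eq ?_ (LinearEquiv.finrank_map_eq g S)
  rintro _ ⟨x, hx, rfl⟩
  exact h x hx

/-- Lemma 3.3 (`lem:v4-stab`), structural form.  Let `R = H ∩ H^⊥`.  Every isometry `g` of
`V` with `g(H) = H` also satisfies `g(H^⊥) = H^⊥` and `g(R) = R`, and induces automorphisms
of `R`, of `H/R`, and of `H^⊥/R`, the latter two being isometries of the induced forms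
(expressed here via representatives).  Conversely, every triple consisting of an
automorphism of `R`, an isometry of `H/R` and an isometry of `H^⊥/R` is induced by some
isometry of `V` preserving `H`. -/
theorem stmt_9 {V : Type*} [AddCommGroup V] [Module ℂ V] [FiniteDimensional ℂ V]
    (B : V →ₗ[ℂ] V →ₗ[ℂ] ℂ)
    (hB : ∀ v, (∀ w, B v w = 0) → v = 0)
    (hrefl : (∀ v w, B v w = B w v) ∨ (∀ v w, B v w = - B w v))
    (H : Submodule ℂ V)
    (R : Submodule ℂ V) (hR : R = H ⊓ bperp B H)
    (RH : Submodule ℂ ↥H) (hRH : RH = Submodule.comap H.subtype R)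
    (RP : Submodule ℂ ↥(bperp B H)) (hRP : RP = Submodule.comap (bperp B H).subtype R) :
    (∀ g : V ≃ₗ[ℂ] V, (∀ v w, B (g v) (g w) = B v w) →
      Submodule.map (g : V →ₗ[ℂ] V) H = H →
      (Submodule.map (g : V →ₗ[ℂ] V) (bperp B H) = bperp B H ∧
       Submodule.map (g : V →ₗ[ℂ] V) R = R ∧
       ∃ (a : ↥R ≃ₗ[ℂ] ↥R) (e : (↥H ⧸ RH) ≃ₗ[ℂ] (↥H ⧸ RH))
         (f : (↥(bperp B H) ⧸ RP) ≃ₗ[ℂ] (↥(bperp B H) ⧸ RP)),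
         (∀ v : ↥R, (a v : V) = g (v : V)) ∧
         (∀ v w : ↥H, (w : V) = g (v : V) →
            e (Submodule.Quotient.mk v) = Submodule.Quotient.mk w) ∧
         (∀ v w : ↥(bperp B H), (w : V) = g (v : V) →
            f (Submodule.Quotient.mk v) = Submodule.Quotient.mk w) ∧
         (∀ v w v' w' : ↥H,
            e (Submodule.Quotient.mk v) = Submodule.Quotient.mk v' →
            e (Submodule.Quotient.mk w) = Submodule.Quotient.mk w' →
            B (v' : V) (w' : V) = B (v : V) (w : V)) ∧
         (∀ v w v' w' : ↥(bperp B H),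
            f (Submodule.Quotient.mk v) = Submodule.Quotient.mk v' →
            f (Submodule.Quotient.mk w) = Submodule.Quotient.mk w' →
            B (v' : V) (w' : V) = B (v : V) (w : V)))) ∧
    (∀ (a : ↥R ≃ₗ[ℂ] ↥R) (e : (↥H ⧸ RH) ≃ₗ[ℂ] (↥H ⧸ RH))
       (f : (↥(bperp B H) ⧸ RP) ≃ₗ[ℂ] (↥(bperp B H) ⧸ RP)),
       (∀ v w v' w' : ↥H,
          e (Submodule.Quotient.mk v) = Submodule.Quotient.mk v' →
          e (Submodule.Quotient.mk w) = Submodule.Quotient.mk w' →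
          B (v' : V) (w' : V) = B (v : V) (w : V)) →
       (∀ v w v' w' : ↥(bperp B H),
          f (Submodule.Quotient.mk v) = Submodule.Quotient.mk v' →
          f (Submodule.Quotient.mk w) = Submodule.Quotient.mk w' →
          B (v' : V) (w' : V) = B (v : V) (w : V)) →
       ∃ g : V ≃ₗ[ℂ] V, (∀ v w, B (g v) (g w) = B v w) ∧
         Submodule.map (g : V →ₗ[ℂ] V) H = H ∧
         (∀ v : ↥R, (a v : V) = g (v : V)) ∧
         (∀ v w : ↥H, (w : V) = g (v : V) →
            e (Submodule.Quotient.mk v) = Submodule.Quotient.mk w) ∧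
         (∀ v w : ↥(bperp B H), (w : V) = g (v : V) →
            f (Submodule.Quotient.mk v) = Submodule.Quotient.mk w)) := by
  obtain ⟨ε, hsymm⟩ : ∃ ε : ℂ, ∀ v w, B v w = ε * B w v := by
    rcases hrefl with h | h
    · exact ⟨1, fun v w => by rw [one_mul, h]⟩
    · exact ⟨-1, fun v w => by rw [neg_one_mul, h]⟩
  have hPH : ∀ p ∈ bperp B H, ∀ x ∈ H, B p x = 0 := fun p hp x hx => hp x hx
  have hHP : ∀ x ∈ H, ∀ p ∈ bperp B H, B x p = 0 := fun x hx p hp => by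
    rw [hsymm, hPH p hp x hx, mul_zero]
  have hRleH : R ≤ H := hR ▸ inf_le_left
  have hRleP : R ≤ bperp B H := hR ▸ inf_le_right
  constructor
  · intro g hg hgH
    have hgP : Submodule.map (g : V →ₗ[ℂ] V) (bperp B H) = bperp B H := by
      refine map_eq_of_forall_mem g _ fun x hx w hw => ?_
      rw [← hgH] at hw
      obtain ⟨u, hu, rfl⟩ := hw
      exact (hg x u).trans (hx u hu)
    have hgR : Submodule.map (g : V →ₗ[ℂ] V) R = R := by
      rw [hR, Submodule.map_inf _ g.injective, hgH, hgP]
    obtain ⟨e, he, he'⟩ := exists_quotient_isometry B H R RH hRH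
      (fun r hr s hs => hPH r (hRleP hr) s hs) (fun r hr s hs => hHP s hs r (hRleP hr))
      g hg hgH hgR
    obtain ⟨f, hf, hf'⟩ := exists_quotient_isometry B (bperp B H) R RP hRP
      (fun r hr s hs => hHP r (hRleH hr) s hs) (fun r hr s hs => hPH s hs r (hRleH hr))
      g hg hgP hgR
    exact ⟨hgP, hgR, g.ofSubmodules R R hgR, e, f, fun v => rfl, he, hf, he', hf'⟩
  · intro a e f he hf
    obtain ⟨k, hk, hka⟩ := exists_lift H R hRleH RH hRH a e
    obtain ⟨l, hl, hla⟩ := exists_lift (bperp B H) R hRleP RP hRP a f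
    have hagree : ∀ (x : H) (y : bperp B H), (x : V) = y → (k x : V) = l y := by
      intro x y hxy
      have hx : (x : V) ∈ R := by rw [hR]; exact ⟨x.2, hxy ▸ y.2⟩
      rw [hka x hx, hla y (hxy ▸ hx)]
      simp only [hxy]
    let φ : V →ₗ.[ℂ] V := ⟨H, H.subtype ∘ₗ k⟩
    let ψ : V →ₗ.[ℂ] V := ⟨bperp B H, (bperp B H).subtype ∘ₗ l⟩
    let W : Submodule ℂ V := H ⊔ bperp B H
    let h : W →ₗ[ℂ] V := (φ.sup ψ hagree).toFun
    have hh : ∀ (x : H) (y : bperp B H) (z : W), (x : V) + y = z → h z = k x + l y :=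
      fun x y z hz => LinearPMap.sup_apply (f := φ) (g := ψ) hagree x y z hz
    have hdec : ∀ z : W, ∃ (x : H) (y : bperp B H), (x : V) + y = z := by
      intro z
      obtain ⟨x, hx, y, hy, hxy⟩ := Submodule.mem_sup.1 z.2
      exact ⟨⟨x, hx⟩, ⟨y, hy⟩, hxy⟩
    have hiso : ∀ z z' : W, B (h z) (h z') = B z z' := by
      intro z z'
      obtain ⟨x, y, hz⟩ := hdec z
      obtain ⟨x', y', hz'⟩ := hdec z'
      rw [hh x y z hz, hh x' y' z' hz', ← hz, ← hz']
      simp only [map_add, LinearMap.add_apply]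
      rw [he x x' (k x) (k x') (hk x).symm (hk x').symm,
        hf y y' (l y) (l y') (hl y).symm (hl y').symm,
        hHP _ (k x).2 _ (l y').2, hPH _ (l y).2 _ (k x').2,
        hHP _ x.2 _ y'.2, hPH _ y.2 _ x'.2]
    have hinj : Function.Injective h := by
      rw [injective_iff_map_eq_zero]
      intro z hz0
      obtain ⟨x, y, hz⟩ := hdec z
      rw [hh x y z hz] at hz0
      -- `k x = -l y` lies in `H ∩ H^⊥ = R`, so `x` and `y` die in the quotients.
      have hkl : (k x : V) = -(l y : V) := eq_neg_of_add_eq_zero_left hz0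
      have hkR : (k x : V) ∈ R := by
        rw [hR]
        exact ⟨(k x).2, hkl ▸ neg_mem (l y).2⟩
      have hlR : (l y : V) ∈ R := by
        rw [hkl] at hkR
        exact neg_mem_iff.1 hkR
      have hx : (x : V) ∈ R := by
        have h1 : (Submodule.Quotient.mk (k x) : H ⧸ RH) = 0 := by
          rw [Submodule.Quotient.mk_eq_zero, hRH]; exact hkR
        rw [hk, e.map_eq_zero_iff, Submodule.Quotient.mk_eq_zero, hRH] at h1
        exact h1
      have hy : (y : V) ∈ R := by
        have h1 : (Submodule.Quotient.mk (l y) : bperp B H ⧸ RP) = 0 := by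
          rw [Submodule.Quotient.mk_eq_zero, hRP]; exact hlR
        rw [hl, f.map_eq_zero_iff, Submodule.Quotient.mk_eq_zero, hRP] at h1
        exact h1
      rw [hka x hx, hla y hy, ← Submodule.coe_add, ← map_add, Submodule.coe_eq_zero,
        a.map_eq_zero_iff] at hz0
      have h2 : (x : V) + y = 0 := congrArg Subtype.val hz0
      exact Subtype.ext (hz.symm.trans h2)
    have hWperp : bperp B W ≤ W := fun v hv =>
      (le_sup_right : bperp B H ≤ W) fun w hw => hv w ((le_sup_left : H ≤ W) hw)
    obtain ⟨g, hg, hgW⟩ := exists_isometry_extending B hB ε hsymm W hWperp h hinj hiso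
    have hgk : ∀ x : H, g x = k x := fun x => by
      have := hh x 0 ⟨x, (le_sup_left : H ≤ W) x.2⟩ (by simp)
      rw [← hgW] at this
      simpa using this
    have hgl : ∀ y : bperp B H, g y = l y := fun y => by
      have := hh 0 y ⟨y, (le_sup_right : bperp B H ≤ W) y.2⟩ (by simp)
      rw [← hgW] at this
      simpa using this
    refine ⟨g, hg, map_eq_of_forall_mem g H fun x hx => ?_, fun v => ?_, fun v w hw => ?_,
      fun v w hw => ?_⟩
    · rw [show g x = k ⟨x, hx⟩ from hgk ⟨x, hx⟩]
      exact (k _).2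
    · exact (hka ⟨v, hRleH v.2⟩ v.2).symm.trans (hgk ⟨v, hRleH v.2⟩).symm
    · rw [hgk] at hw
      rw [← hk, Subtype.ext hw]
    · rw [hgl] at hw
      rw [← hl, Subtype.ext hw]
end

section
/- Let H, H' ⊆ B be subspaces. Then there exists g ∈ Q_B with g(H) = H' if and only if for every i with 1 ≤ i ≤ m there exists an isometry h_i of (B_i, ⟨−,−⟩_{B_i}) with det h_i = 1 and h_i(pr_i H) = pr_i H'. -/
/-!
The bilinear forms only enter through the groups that the diagonal blocks range over, so the
argument is about block upper triangular maps `g` with a prescribed diagonal `d` (`IsTri g d`).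
Such maps are bijective, closed under composition and inversion, and send `pr_i H` to
`d i (pr_i H)` (`IsTri.map_prI`), which gives the forward direction.

Conversely, every subspace `H` is the image of the "split" subspace `∏ pr_i H` under a triangular
map with identity diagonal (`exists_isTri_split`): choose linear maps `t_i : B_i → B_{≤ i}` lifting
the identity of `B_i` and sending `pr_i H` into `H`, and put `T v = ∑ t_i (v_i)`.
With `T`, `T'` the maps so obtained from `H`, `H'`, and `D` the block diagonal map
with blocks `h_i`, the composite `T' ∘ D ∘ T⁻¹` is in `Q_B` and carries `H` to `H'`.
-/

open Module

/-- `B_{≤ i} = B₁ ⊕ ⋯ ⊕ B_i`, as a subspace of `B = B₁ ⊕ ⋯ ⊕ B_m` (modelled as the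
product `∀ j, Bi j`): the vectors whose coordinates vanish beyond `i`. -/
def Ble {m : ℕ} (Bi : Fin m → Type*) [∀ i, AddCommGroup (Bi i)] [∀ i, Module ℂ (Bi i)]
    (i : Fin m) : Submodule ℂ (∀ j, Bi j) :=
  Submodule.pi (Set.Ioi i) (fun j => (⊥ : Submodule ℂ (Bi j)))

/-- `B_{< i} = B₁ ⊕ ⋯ ⊕ B_{i-1}`, as a subspace of `B = B₁ ⊕ ⋯ ⊕ B_m`: the vectors whose
coordinates vanish from `i` on. -/
def Blt {m : ℕ} (Bi : Fin m → Type*) [∀ i, AddCommGroup (Bi i)] [∀ i, Module ℂ (Bi i)]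
    (i : Fin m) : Submodule ℂ (∀ j, Bi j) :=
  Submodule.pi (Set.Ici i) (fun j => (⊥ : Submodule ℂ (Bi j)))

/-- `pr_i H ⊆ B_i`: the image of `H ∩ B_{≤ i}` under the projection `B_{≤ i} → B_i`
with kernel `B_{< i}` (in the product model, the `i`-th coordinate projection). -/
def prI {m : ℕ} (Bi : Fin m → Type*) [∀ i, AddCommGroup (Bi i)] [∀ i, Module ℂ (Bi i)]
    (i : Fin m) (H : Submodule ℂ (∀ j, Bi j)) : Submodule ℂ (Bi i) :=
  Submodule.map (LinearMap.proj i : (∀ j, Bi j) →ₗ[ℂ] Bi i) (H ⊓ Ble Bi i)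

/-- Membership in the group `Q_B`: a linear endomorphism `g` of `B = B₁ ⊕ ⋯ ⊕ B_m` lies in
`Q_B` if it is a linear automorphism and, for each `i`, there is an isometry `gi` of
`(B_i, ⟨-,-⟩_{B_i})` with `det gi = 1` such that `g v - gi v ∈ B_{< i}` for all `v ∈ B_i`. -/
def memQB {m : ℕ} (Bi : Fin m → Type*) [∀ i, AddCommGroup (Bi i)] [∀ i, Module ℂ (Bi i)]
    (βi : ∀ i, Bi i →ₗ[ℂ] Bi i →ₗ[ℂ] ℂ)
    (g : (∀ j, Bi j) →ₗ[ℂ] (∀ j, Bi j)) : Prop :=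
  Function.Bijective g ∧
  ∀ i, ∃ gi : Bi i ≃ₗ[ℂ] Bi i,
    (∀ x y, βi i (gi x) (gi y) = βi i x y) ∧
    LinearMap.det (gi : Bi i →ₗ[ℂ] Bi i) = 1 ∧
    ∀ v : ∀ j, Bi j, (∀ j, j ≠ i → v j = 0) →
      g v - Pi.single i (gi (v i)) ∈ Blt Bi i

section Triangular

variable {m : ℕ} {Bi : Fin m → Type*} [∀ i, AddCommGroup (Bi i)] [∀ i, Module ℂ (Bi i)]

lemma mem_Ble {i : Fin m} {v : ∀ j, Bi j} : v ∈ Ble Bi i ↔ ∀ j, i < j → v j = 0 := by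
  simp [Ble, Submodule.mem_pi]

lemma mem_Blt {i : Fin m} {v : ∀ j, Bi j} : v ∈ Blt Bi i ↔ ∀ j, i ≤ j → v j = 0 := by
  simp [Blt, Submodule.mem_pi]

lemma single_mem_Ble (i : Fin m) (x : Bi i) : Pi.single i x ∈ Ble Bi i :=
  mem_Ble.2 fun _ hj => Pi.single_eq_of_ne hj.ne' x

lemma mem_prI {i : Fin m} {H : Submodule ℂ (∀ j, Bi j)} {x : Bi i} :
    x ∈ prI Bi i H ↔ ∃ v ∈ H, v ∈ Ble Bi i ∧ v i = x := by
  simp [prI, and_assoc]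

/-- `g` is block upper triangular with diagonal blocks `d i`: it preserves each `B_{≤ i}` and acts
on the quotient `B_{≤ i} / B_{< i} = B_i` by `d i`. -/
def IsTri (g : (∀ j, Bi j) →ₗ[ℂ] (∀ j, Bi j)) (d : ∀ i, Bi i ≃ₗ[ℂ] Bi i) : Prop :=
  ∀ i, ∀ v ∈ Ble Bi i, g v ∈ Ble Bi i ∧ g v i = d i (v i)

/-- A nonzero vector has a last nonzero coordinate. -/
lemma exists_last {v : ∀ j, Bi j} {k : Fin m} (hk : v k ≠ 0) :
    ∃ j, k ≤ j ∧ v j ≠ 0 ∧ v ∈ Ble Bi j := by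
  classical
  obtain ⟨j, hkj, hj⟩ := (Set.toFinite {j | v j ≠ 0}).exists_le_maximal hk
  refine ⟨j, hkj, hj.prop, mem_Ble.2 fun l hl => ?_⟩
  by_contra h
  exact absurd (hj.le_of_ge h hl.le) (not_le.2 hl)

lemma IsTri.mem_of_apply_mem {g : (∀ j, Bi j) →ₗ[ℂ] (∀ j, Bi j)} {d : ∀ i, Bi i ≃ₗ[ℂ] Bi i}
    (hg : IsTri g d) {i : Fin m} {v : ∀ j, Bi j} (hv : g v ∈ Ble Bi i) : v ∈ Ble Bi i := by
  refine mem_Ble.2 fun k hk => ?_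
  by_contra h
  obtain ⟨j, hkj, hj, hvj⟩ := exists_last h
  have h0 := mem_Ble.1 hv j (hk.trans_le hkj)
  rw [(hg j v hvj).2] at h0
  exact hj ((d j).map_eq_zero_iff.1 h0)

lemma IsTri.bijective [∀ i, FiniteDimensional ℂ (Bi i)]
    {g : (∀ j, Bi j) →ₗ[ℂ] (∀ j, Bi j)} {d : ∀ i, Bi i ≃ₗ[ℂ] Bi i}
    (hg : IsTri g d) : Function.Bijective g := by
  have hinj : Function.Injective g := by
    refine (injective_iff_map_eq_zero g).2 fun v hv => ?_
    by_contra h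
    obtain ⟨k, hk⟩ := Function.ne_iff.1 h
    obtain ⟨j, -, hj, hvj⟩ := exists_last hk
    have h0 := (hg j v hvj).2
    rw [hv] at h0
    exact hj ((d j).map_eq_zero_iff.1 h0.symm)
  exact ⟨hinj, LinearMap.injective_iff_surjective.1 hinj⟩

lemma IsTri.comp {g g' : (∀ j, Bi j) →ₗ[ℂ] (∀ j, Bi j)} {d d' : ∀ i, Bi i ≃ₗ[ℂ] Bi i}
    (hg : IsTri g d) (hg' : IsTri g' d') : IsTri (g ∘ₗ g') (fun i => (d' i).trans (d i)) := by
  intro i v hv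
  obtain ⟨h1, h2⟩ := hg' i v hv
  obtain ⟨h3, h4⟩ := hg i _ h1
  exact ⟨h3, by simp [h4, h2]⟩

lemma IsTri.symm {g : (∀ j, Bi j) ≃ₗ[ℂ] (∀ j, Bi j)} {d : ∀ i, Bi i ≃ₗ[ℂ] Bi i}
    (hg : IsTri (g : (∀ j, Bi j) →ₗ[ℂ] (∀ j, Bi j)) d) :
    IsTri (g.symm : (∀ j, Bi j) →ₗ[ℂ] (∀ j, Bi j)) (fun i => (d i).symm) := by
  intro i v hv
  have h : g.symm v ∈ Ble Bi i := hg.mem_of_apply_mem (by simpa using hv)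
  refine ⟨h, ?_⟩
  have h2 := (hg i _ h).2
  simp only [LinearEquiv.coe_coe, LinearEquiv.apply_symm_apply] at h2
  simp [h2]

lemma IsTri.map_prI {g : (∀ j, Bi j) →ₗ[ℂ] (∀ j, Bi j)} {d : ∀ i, Bi i ≃ₗ[ℂ] Bi i}
    (hg : IsTri g d) (H : Submodule ℂ (∀ j, Bi j)) (i : Fin m) :
    Submodule.map (d i : Bi i →ₗ[ℂ] Bi i) (prI Bi i H) = prI Bi i (Submodule.map g H) := by
  ext y
  simp only [Submodule.mem_map, mem_prI]
  constructor
  · rintro ⟨_, ⟨v, hv, hvi, rfl⟩, rfl⟩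
    exact ⟨g v, ⟨v, hv, rfl⟩, hg i v hvi⟩
  · rintro ⟨_, ⟨v, hv, rfl⟩, hvi, rfl⟩
    have h := hg.mem_of_apply_mem hvi
    exact ⟨v i, ⟨v, hv, h, rfl⟩, (hg i v h).2.symm⟩

/-- A map that is triangular on each summand `B_i`, as in the definition of `Q_B`, is triangular
with respect to the filtration. -/
lemma isTri_of_single {g : (∀ j, Bi j) →ₗ[ℂ] (∀ j, Bi j)} {d : ∀ i, Bi i ≃ₗ[ℂ] Bi i}
    (h : ∀ i, ∀ v : ∀ j, Bi j, (∀ j, j ≠ i → v j = 0) →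
      g v - Pi.single i (d i (v i)) ∈ Blt Bi i) : IsTri g d := by
  have key : ∀ j (x : Bi j) k, j ≤ k →
      g (Pi.single j x) k = (Pi.single j (d j x) : ∀ l, Bi l) k := by
    intro j x k hjk
    have := mem_Blt.1 (h j (Pi.single j x) fun l hl => Pi.single_eq_of_ne hl x) k hjk
    simpa [sub_eq_zero] using this
  intro i v hv
  have hsum : ∀ k, g v k = ∑ j, g (Pi.single j (v j)) k := by
    intro k
    conv_lhs => rw [← Finset.univ_sum_single v, map_sum, Finset.sum_apply]
  constructor
  · refine mem_Ble.2 fun k hk => ?_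
    rw [hsum]
    refine Finset.sum_eq_zero fun j _ => ?_
    rcases le_or_gt j i with hj | hj
    · rw [key j _ k (hj.trans hk.le), Pi.single_eq_of_ne (hj.trans_lt hk).ne']
    · simp [mem_Ble.1 hv j hj]
  · rw [hsum, Finset.sum_eq_single i, key i _ i le_rfl, Pi.single_eq_same]
    · intro j _ hj
      rcases lt_or_gt_of_ne hj with hj | hj
      · rw [key j _ i hj.le, Pi.single_eq_of_ne hj.ne']
      · simp [mem_Ble.1 hv j hj]
    · simp

lemma IsTri.sub_single_mem {g : (∀ j, Bi j) →ₗ[ℂ] (∀ j, Bi j)} {d : ∀ i, Bi i ≃ₗ[ℂ] Bi i}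
    (hg : IsTri g d) (i : Fin m) (v : ∀ j, Bi j) (hv : ∀ j, j ≠ i → v j = 0) :
    g v - Pi.single i (d i (v i)) ∈ Blt Bi i := by
  obtain ⟨h1, h2⟩ := hg i v (mem_Ble.2 fun j hj => hv j hj.ne')
  refine mem_Blt.2 fun j hj => ?_
  rcases hj.eq_or_lt with rfl | hj
  · simp [h2]
  · simp [mem_Ble.1 h1 j hj, Pi.single_eq_of_ne hj.ne']

/-- A lift of the identity of `B_i` to `B_{≤ i}` that sends `pr_i H` into `H`. -/
lemma exists_lift_s11 (H : Submodule ℂ (∀ j, Bi j)) (i : Fin m) :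
    ∃ t : Bi i →ₗ[ℂ] (∀ j, Bi j), (∀ x, t x ∈ Ble Bi i) ∧ (∀ x, t x i = x) ∧
      ∀ x ∈ prI Bi i H, t x ∈ H := by
  -- `s` is a linear section of `H ∩ B_{≤ i} → pr_i H`, and `p` a projection of `B_i` onto `pr_i H`.
  obtain ⟨s, hs⟩ : ∃ s : prI Bi i H →ₗ[ℂ] ↥(H ⊓ Ble Bi i),
      ∀ y, (s y : ∀ j, Bi j) i = y := by
    obtain ⟨s, hs⟩ := LinearMap.exists_rightInverse_of_surjective
      ((LinearMap.proj i : (∀ j, Bi j) →ₗ[ℂ] Bi i).submoduleMap (H ⊓ Ble Bi i))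
      (LinearMap.range_eq_top.2 (LinearMap.submoduleMap_surjective _ _))
    exact ⟨s, fun y => congrArg Subtype.val (LinearMap.congr_fun hs y)⟩
  obtain ⟨p, hp⟩ := LinearMap.exists_leftInverse_of_injective (prI Bi i H).subtype
    (Submodule.ker_subtype _)
  refine ⟨(H ⊓ Ble Bi i).subtype ∘ₗ s ∘ₗ p +
    LinearMap.single ℂ Bi i ∘ₗ (LinearMap.id - (prI Bi i H).subtype ∘ₗ p), ?_, ?_, ?_⟩
  · intro x
    exact add_mem (s (p x)).2.2 (single_mem_Ble i _)
  · intro x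
    simp [hs]
  · intro x hx
    have h : p x = ⟨x, hx⟩ := LinearMap.congr_fun hp ⟨x, hx⟩
    have h' := (s (p x)).2.1
    simpa [h] using h'

/-- Every subspace `H` is the image of `∏ pr_i H` under a unipotent triangular map. -/
lemma exists_isTri_split (H : Submodule ℂ (∀ j, Bi j)) :
    ∃ T : (∀ j, Bi j) →ₗ[ℂ] (∀ j, Bi j), IsTri T (fun i => LinearEquiv.refl ℂ (Bi i)) ∧
      Submodule.map T (Submodule.pi Set.univ fun i => prI Bi i H) = H := by
  choose t ht1 ht2 ht3 using exists_lift_s11 H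
  let T : (∀ j, Bi j) →ₗ[ℂ] (∀ j, Bi j) := ∑ i, t i ∘ₗ LinearMap.proj i
  have hT : ∀ v, T v = ∑ i, t i (v i) := fun v => by simp [T]
  have hTs : ∀ i (x : Bi i), T (Pi.single i x) = t i x := by
    intro i x
    rw [hT, Finset.sum_eq_single i]
    · simp
    · intro j _ hj
      simp [Pi.single_eq_of_ne hj]
    · simp
  refine ⟨T, isTri_of_single fun i v hv => ?_, le_antisymm ?_ ?_⟩
  · have hv' : v = Pi.single i (v i) := by
      ext j
      rcases eq_or_ne j i with rfl | hj
      · simp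
      · rw [hv j hj, Pi.single_eq_of_ne hj]
    refine mem_Blt.2 fun j hj => ?_
    rw [hv', hTs]
    rcases hj.eq_or_lt with rfl | hj
    · simp [ht2]
    · simp [mem_Ble.1 (ht1 i (v i)) j hj, Pi.single_eq_of_ne hj.ne']
  · rintro _ ⟨v, hv, rfl⟩
    rw [hT]
    exact sum_mem fun i _ => ht3 i _ (hv i trivial)
  · -- Clear the last nonzero coordinate `k` of `w ∈ H` by subtracting `T (single k (w k))`.
    have key : ∀ n : ℕ, ∀ w ∈ H, (∀ j : Fin m, n ≤ j → w j = 0) →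
        w ∈ Submodule.map T (Submodule.pi Set.univ fun i => prI Bi i H) := by
      intro n
      induction n with
      | zero =>
        intro w _ h0
        rw [show w = 0 from funext fun j => h0 j (Nat.zero_le _)]
        exact zero_mem _
      | succ n ih =>
        intro w hw h0
        by_cases hn : n < m
        · let k : Fin m := ⟨n, hn⟩
          have hwk : w ∈ Ble Bi k := mem_Ble.2 fun j hj => h0 j hj
          have hk : w k ∈ prI Bi k H := mem_prI.2 ⟨w, hw, hwk, rfl⟩
          have h1 : w - t k (w k) ∈
              Submodule.map T (Submodule.pi Set.univ fun i => prI Bi i H) := by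
            refine ih _ (sub_mem hw (ht3 k _ hk)) fun j hj => ?_
            rcases (show k ≤ j from hj).eq_or_lt with rfl | hj
            · simp [ht2]
            · simp [mem_Ble.1 hwk j hj, mem_Ble.1 (ht1 k (w k)) j hj]
          have h2 : t k (w k) ∈
              Submodule.map T (Submodule.pi Set.univ fun i => prI Bi i H) := by
            refine ⟨Pi.single k (w k), fun j _ => ?_, hTs k _⟩
            rcases eq_or_ne j k with rfl | hj
            · simpa using hk
            · simp [Pi.single_eq_of_ne hj]
          simpa using add_mem h1 h2
        · exact ih w hw fun j hj => absurd (hj.trans_lt j.2) hn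
    exact fun w hw => key m w hw fun j hj => absurd j.2 (not_lt.2 hj)

end Triangular

/-- Proposition 5.1(1) (`prop:filt-orbits`), orbit criterion: two subspaces `H, H'` of
`B = B₁ ⊕ ⋯ ⊕ B_m` lie in the same `Q_B`-orbit if and only if for each `i` some isometry of
`B_i` of determinant `1` carries `pr_i H` to `pr_i H'`. -/
theorem stmt_11 {m : ℕ} (Bi : Fin m → Type*)
    [∀ i, AddCommGroup (Bi i)] [∀ i, Module ℂ (Bi i)]
    [∀ i, FiniteDimensional ℂ (Bi i)] [∀ i, Nontrivial (Bi i)]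
    (βi : ∀ i, Bi i →ₗ[ℂ] Bi i →ₗ[ℂ] ℂ)
    (hnd : ∀ i, ∀ v, (∀ w, βi i v w = 0) → v = 0)
    (hrefl : ∀ i, (∀ v w, βi i v w = βi i w v) ∨ (∀ v w, βi i v w = - βi i w v))
    (H H' : Submodule ℂ (∀ j, Bi j)) :
    (∃ g : (∀ j, Bi j) →ₗ[ℂ] (∀ j, Bi j), memQB Bi βi g ∧ Submodule.map g H = H') ↔
      (∀ i, ∃ h : Bi i ≃ₗ[ℂ] Bi i,
        (∀ x y, βi i (h x) (h y) = βi i x y) ∧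
        LinearMap.det (h : Bi i →ₗ[ℂ] Bi i) = 1 ∧
        Submodule.map (h : Bi i →ₗ[ℂ] Bi i) (prI Bi i H) = prI Bi i H') := by
  constructor
  · rintro ⟨g, ⟨-, hg⟩, rfl⟩
    choose d hd1 hd2 hd3 using hg
    exact fun i => ⟨d i, hd1 i, hd2 i, (isTri_of_single hd3).map_prI H i⟩
  · intro h
    choose h hh1 hh2 hh3 using h
    obtain ⟨T, hT, hTH⟩ := exists_isTri_split H
    obtain ⟨T', hT', hTH'⟩ := exists_isTri_split H'
    let e := LinearEquiv.ofBijective T hT.bijective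
    let D : (∀ j, Bi j) →ₗ[ℂ] (∀ j, Bi j) := LinearEquiv.piCongrRight h
    have hD : IsTri D h := fun i v hv =>
      ⟨mem_Ble.2 fun j hj => by simp [D, mem_Ble.1 hv j hj], rfl⟩
    have he : IsTri (e : (∀ j, Bi j) →ₗ[ℂ] (∀ j, Bi j)) (fun i => LinearEquiv.refl ℂ (Bi i)) := hT
    have hg := hT'.comp (hD.comp he.symm)
    have hDmap : Submodule.map D (Submodule.pi Set.univ fun i => prI Bi i H) =
        Submodule.pi Set.univ fun i => prI Bi i H' := by
      ext v
      simp only [Submodule.mem_map, Submodule.mem_pi, Set.mem_univ, true_imp_iff, ← hh3]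
      constructor
      · rintro ⟨w, hw, rfl⟩ i
        exact ⟨w i, hw i, rfl⟩
      · intro hv
        choose w hw hwv using hv
        exact ⟨w, hw, funext hwv⟩
    have heH : Submodule.map (e.symm : (∀ j, Bi j) →ₗ[ℂ] (∀ j, Bi j)) H =
        Submodule.pi Set.univ fun i => prI Bi i H := by
      conv_lhs => rw [← hTH]
      rw [← Submodule.map_comp]
      have : (e.symm : (∀ j, Bi j) →ₗ[ℂ] (∀ j, Bi j)) ∘ₗ T = LinearMap.id :=
        LinearMap.ext fun v => e.symm_apply_apply v
      rw [this, Submodule.map_id]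
    refine ⟨_, ⟨hg.bijective, fun i => ⟨h i, hh1 i, hh2 i, fun v hv => ?_⟩⟩, ?_⟩
    · exact hg.sub_single_mem i v hv
    · rw [Submodule.map_comp, Submodule.map_comp, heH, hDmap, hTH']
end
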